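/- arXiv:1507.07498 — 2 statements merged into one kernel-verified Lean document; each statement's English description precedes it below -/
import Mathlib

section
/- Every pair (k,p) with k ∈ ℤ^4 and p ∈ ℤ^12 having nonnegative entries such that p ∈ Σ(k) can be written as a sum, with nonnegative integer coefficients, of the 52 fundamental generators. (This is the saturation property — Conjecture 2 of Vinberg — for the semigroup of essential signatures of type D4: the semigroup generated by the essential signatures of fundamental highest weights contains every lattice point of the cone it spans.) -/
/-- The 70 linear inequalities defining Σ(k). -/
def SatisfiesIneqs (k : Fin 4 → ℤ) (p : Fin 12 → ℤ) : Prop :=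
  p 11 ≤ k 0 ∧
  p 10 ≤ k 1 ∧
  p 8 ≤ k 2 ∧
  p 3 ≤ k 3 ∧
  p 6 + p 10 + p 11 ≤ k 0 + k 1 ∧
  p 6 + p 7 + p 8 + p 9 + p 11 ≤ k 0 + k 1 + k 2 ∧
  p 6 + p 8 + p 9 + p 10 + p 11 ≤ k 0 + k 1 + k 2 ∧
  p 8 + p 9 + p 10 ≤ k 1 + k 2 ∧
  p 3 + p 4 + p 5 + p 6 + p 11 ≤ k 0 + k 1 + k 3 ∧
  p 3 + p 4 + p 6 + p 10 + p 11 ≤ k 0 + k 1 + k 3 ∧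
  p 3 + p 4 + p 10 ≤ k 1 + k 3 ∧
  p 1 + p 3 + p 4 + p 8 + p 9 ≤ k 1 + k 2 + k 3 ∧
  p 3 + p 4 + p 8 + p 9 + p 10 ≤ k 1 + k 2 + k 3 ∧
  p 2 + p 3 + p 4 + p 5 + p 6 + p 8 + p 11 ≤ k 0 + k 1 + k 2 + k 3 ∧
  p 1 + p 2 + p 3 + p 4 + p 6 + p 8 + p 11 ≤ k 0 + k 1 + k 2 + k 3 ∧
  p 1 + p 2 + p 3 + p 6 + p 7 + p 8 + p 11 ≤ k 0 + k 1 + k 2 + k 3 ∧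
  p 1 + p 3 + p 6 + p 7 + p 8 + p 9 + p 11 ≤ k 0 + k 1 + k 2 + k 3 ∧
  p 3 + p 4 + p 6 + p 8 + p 9 + p 10 + p 11 ≤ k 0 + k 1 + k 2 + k 3 ∧
  p 1 + p 3 + p 4 + p 6 + p 8 + p 9 + p 11 ≤ k 0 + k 1 + k 2 + k 3 ∧
  p 0 + p 2 + p 3 + p 4 + p 5 + p 6 + p 7 + p 8 + p 10 ≤ k 0 + 2 * k 1 + k 2 + k 3 ∧
  p 0 + p 1 + p 2 + p 3 + p 4 + p 6 + p 7 + p 8 + p 10 ≤ k 0 + 2 * k 1 + k 2 + k 3 ∧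
  p 2 + p 3 + p 4 + p 5 + p 6 + p 7 + p 8 + p 10 + p 11 ≤ k 0 + 2 * k 1 + k 2 + k 3 ∧
  p 1 + p 2 + p 3 + p 4 + p 6 + p 7 + p 8 + p 10 + p 11 ≤ k 0 + 2 * k 1 + k 2 + k 3 ∧
  p 0 + p 1 + p 3 + p 4 + p 6 + p 7 + p 8 + p 9 + p 10 ≤ k 0 + 2 * k 1 + k 2 + k 3 ∧
  p 1 + p 3 + p 4 + p 6 + p 7 + p 8 + p 9 + p 10 + p 11 ≤ k 0 + 2 * k 1 + k 2 + k 3 ∧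
  p 0 + p 3 + p 4 + p 5 + p 6 + p 7 + p 8 + p 9 + p 10 ≤ k 0 + 2 * k 1 + k 2 + k 3 ∧
  p 3 + p 4 + p 5 + p 6 + p 7 + p 8 + p 9 + p 10 + p 11 ≤ k 0 + 2 * k 1 + k 2 + k 3 ∧
  p 1 + p 2 + p 3 + p 4 + p 6 + p 7 + 2 * p 8 + p 9 + p 10 + p 11 ≤ k 0 + 2 * k 1 + 2 * k 2 + k 3 ∧
  p 2 + p 3 + p 4 + p 5 + p 6 + p 7 + 2 * p 8 + p 9 + p 10 + p 11 ≤ k 0 + 2 * k 1 + 2 * k 2 + k 3 ∧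
  p 0 + p 1 + p 2 + p 3 + p 4 + p 6 + p 7 + 2 * p 8 + p 9 + p 10 ≤ k 0 + 2 * k 1 + 2 * k 2 + k 3 ∧
  p 0 + p 2 + p 3 + p 4 + p 5 + p 6 + p 7 + 2 * p 8 + p 9 + p 10 ≤ k 0 + 2 * k 1 + 2 * k 2 + k 3 ∧
  p 1 + p 3 + p 4 + p 6 + p 7 + 2 * p 8 + 2 * p 9 + p 10 + p 11 ≤ k 0 + 2 * k 1 + 2 * k 2 + k 3 ∧
  p 1 + p 2 + 2 * p 3 + p 4 + p 5 + p 6 + p 7 + p 8 + p 10 + p 11 ≤ k 0 + 2 * k 1 + k 2 + 2 * k 3 ∧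
  p 1 + 2 * p 3 + p 4 + p 5 + p 6 + p 7 + p 8 + p 9 + p 10 + p 11 ≤ k 0 + 2 * k 1 + k 2 + 2 * k 3 ∧
  p 0 + p 1 + p 2 + 2 * p 3 + p 4 + p 5 + p 6 + p 7 + p 8 + p 10 ≤ k 0 + 2 * k 1 + k 2 + 2 * k 3 ∧
  p 0 + p 1 + 2 * p 3 + p 4 + p 5 + p 6 + p 7 + p 8 + p 9 + p 10 ≤ k 0 + 2 * k 1 + k 2 + 2 * k 3 ∧
  p 1 + p 2 + 2 * p 3 + 2 * p 4 + p 5 + p 6 + p 8 + p 10 + p 11 ≤ k 0 + 2 * k 1 + k 2 + 2 * k 3 ∧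
  p 1 + 2 * p 3 + 2 * p 4 + p 5 + p 6 + p 8 + p 9 + p 10 + p 11 ≤ k 0 + 2 * k 1 + k 2 + 2 * k 3 ∧
  p 2 + p 3 + p 4 + p 5 + 2 * p 6 + p 7 + p 8 + p 10 + 2 * p 11 ≤ 2 * k 0 + 2 * k 1 + k 2 + k 3 ∧
  p 3 + p 4 + p 5 + 2 * p 6 + p 7 + p 8 + p 9 + p 10 + 2 * p 11 ≤ 2 * k 0 + 2 * k 1 + k 2 + k 3 ∧
  p 1 + p 2 + p 3 + p 4 + 2 * p 6 + p 7 + p 8 + p 10 + 2 * p 11 ≤ 2 * k 0 + 2 * k 1 + k 2 + k 3 ∧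
  p 1 + p 3 + p 4 + 2 * p 6 + p 7 + p 8 + p 9 + p 10 + 2 * p 11 ≤ 2 * k 0 + 2 * k 1 + k 2 + k 3 ∧
  p 0 + p 1 + p 2 + 2 * p 3 + p 4 + p 5 + p 6 + p 7 + 2 * p 8 + p 9 + p 10 ≤ k 0 + 2 * k 1 + 2 * k 2 + 2 * k 3 ∧
  p 1 + p 2 + 2 * p 3 + p 4 + p 5 + p 6 + p 7 + 2 * p 8 + p 9 + p 10 + p 11 ≤ k 0 + 2 * k 1 + 2 * k 2 + 2 * k 3 ∧
  p 1 + p 2 + 2 * p 3 + 2 * p 4 + p 5 + p 6 + 2 * p 8 + p 9 + p 10 + p 11 ≤ k 0 + 2 * k 1 + 2 * k 2 + 2 * k 3 ∧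
  p 1 + p 2 + 2 * p 3 + p 4 + p 5 + 2 * p 6 + p 7 + p 8 + p 10 + 2 * p 11 ≤ 2 * k 0 + 2 * k 1 + k 2 + 2 * k 3 ∧
  p 1 + 2 * p 3 + p 4 + p 5 + 2 * p 6 + p 7 + p 8 + p 9 + p 10 + 2 * p 11 ≤ 2 * k 0 + 2 * k 1 + k 2 + 2 * k 3 ∧
  p 1 + p 2 + 2 * p 3 + 2 * p 4 + p 5 + 2 * p 6 + p 8 + p 10 + 2 * p 11 ≤ 2 * k 0 + 2 * k 1 + k 2 + 2 * k 3 ∧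
  p 1 + 2 * p 3 + 2 * p 4 + p 5 + 2 * p 6 + p 8 + p 9 + p 10 + 2 * p 11 ≤ 2 * k 0 + 2 * k 1 + k 2 + 2 * k 3 ∧
  p 1 + p 2 + p 3 + p 4 + 2 * p 6 + p 7 + 2 * p 8 + p 9 + p 10 + 2 * p 11 ≤ 2 * k 0 + 2 * k 1 + 2 * k 2 + k 3 ∧
  p 2 + p 3 + p 4 + p 5 + 2 * p 6 + p 7 + 2 * p 8 + p 9 + p 10 + 2 * p 11 ≤ 2 * k 0 + 2 * k 1 + 2 * k 2 + k 3 ∧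
  p 1 + p 3 + p 4 + 2 * p 6 + p 7 + 2 * p 8 + 2 * p 9 + p 10 + 2 * p 11 ≤ 2 * k 0 + 2 * k 1 + 2 * k 2 + k 3 ∧
  p 1 + p 2 + 2 * p 3 + p 4 + p 5 + 2 * p 6 + p 7 + 2 * p 8 + p 9 + p 10 + 2 * p 11 ≤ 2 * k 0 + 2 * k 1 + 2 * k 2 + 2 * k 3 ∧
  p 1 + p 2 + 2 * p 3 + 2 * p 4 + p 5 + 2 * p 6 + 2 * p 8 + p 9 + p 10 + 2 * p 11 ≤ 2 * k 0 + 2 * k 1 + 2 * k 2 + 2 * k 3 ∧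
  p 1 + p 2 + 2 * p 3 + 2 * p 4 + p 5 + p 6 + p 7 + p 8 + 2 * p 10 + p 11 ≤ k 0 + 3 * k 1 + k 2 + 2 * k 3 ∧
  p 1 + 2 * p 3 + 2 * p 4 + p 5 + p 6 + p 7 + p 8 + p 9 + 2 * p 10 + p 11 ≤ k 0 + 3 * k 1 + k 2 + 2 * k 3 ∧
  p 0 + p 1 + p 2 + 2 * p 3 + 2 * p 4 + p 5 + p 6 + p 7 + p 8 + 2 * p 10 ≤ k 0 + 3 * k 1 + k 2 + 2 * k 3 ∧
  p 0 + p 1 + 2 * p 3 + 2 * p 4 + p 5 + p 6 + p 7 + p 8 + p 9 + 2 * p 10 ≤ k 0 + 3 * k 1 + k 2 + 2 * k 3 ∧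
  p 0 + p 1 + 2 * p 3 + 2 * p 4 + p 5 + p 6 + p 7 + 2 * p 8 + 2 * p 9 + 2 * p 10 ≤ k 0 + 3 * k 1 + 2 * k 2 + 2 * k 3 ∧
  p 1 + 2 * p 3 + 2 * p 4 + p 5 + p 6 + p 7 + 2 * p 8 + 2 * p 9 + 2 * p 10 + p 11 ≤ k 0 + 3 * k 1 + 2 * k 2 + 2 * k 3 ∧
  p 0 + p 1 + 2 * p 3 + 2 * p 4 + p 5 + 2 * p 6 + p 7 + p 8 + p 9 + 2 * p 10 + p 11 ≤ 2 * k 0 + 3 * k 1 + k 2 + 2 * k 3 ∧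
  p 0 + p 1 + p 2 + 2 * p 3 + 2 * p 4 + p 5 + 2 * p 6 + p 7 + p 8 + 2 * p 10 + p 11 ≤ 2 * k 0 + 3 * k 1 + k 2 + 2 * k 3 ∧
  p 0 + p 1 + 2 * p 3 + 2 * p 4 + p 5 + 2 * p 6 + p 7 + 2 * p 8 + 2 * p 9 + 2 * p 10 + p 11 ≤ 2 * k 0 + 3 * k 1 + 2 * k 2 + 2 * k 3 ∧
  p 1 + p 2 + 2 * p 3 + 2 * p 4 + p 5 + p 6 + p 7 + 3 * p 8 + 2 * p 9 + 2 * p 10 + p 11 ≤ k 0 + 3 * k 1 + 3 * k 2 + 2 * k 3 ∧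
  p 0 + p 1 + p 2 + 2 * p 3 + 2 * p 4 + p 5 + p 6 + p 7 + 3 * p 8 + 2 * p 9 + 2 * p 10 ≤ k 0 + 3 * k 1 + 3 * k 2 + 2 * k 3 ∧
  p 1 + p 2 + 2 * p 3 + 2 * p 4 + p 5 + 3 * p 6 + p 7 + p 8 + 2 * p 10 + 3 * p 11 ≤ 3 * k 0 + 3 * k 1 + k 2 + 2 * k 3 ∧
  p 1 + 2 * p 3 + 2 * p 4 + p 5 + 3 * p 6 + p 7 + p 8 + p 9 + 2 * p 10 + 3 * p 11 ≤ 3 * k 0 + 3 * k 1 + k 2 + 2 * k 3 ∧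
  p 1 + p 2 + 2 * p 3 + 2 * p 4 + p 5 + 3 * p 6 + p 7 + 3 * p 8 + 2 * p 9 + 2 * p 10 + 3 * p 11 ≤ 3 * k 0 + 3 * k 1 + 3 * k 2 + 2 * k 3 ∧
  p 0 + p 1 + p 2 + 2 * p 3 + 2 * p 4 + p 5 + 2 * p 6 + p 7 + 3 * p 8 + 2 * p 9 + 2 * p 10 + p 11 ≤ 2 * k 0 + 3 * k 1 + 3 * k 2 + 2 * k 3 ∧
  p 1 + 2 * p 3 + 2 * p 4 + p 5 + 3 * p 6 + p 7 + 2 * p 8 + 2 * p 9 + 2 * p 10 + 3 * p 11 ≤ 3 * k 0 + 3 * k 1 + 2 * k 2 + 2 * k 3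

/-- Σ(k): the set of 12-tuples of nonnegative integers satisfying the 70 inequalities. -/
def SigmaSet (k : Fin 4 → ℤ) : Set (Fin 12 → ℤ) :=
  {p | (∀ j, 0 ≤ p j) ∧ SatisfiesIneqs k p}

/-- The 52 fundamental generators in (ℤ^4) × (ℤ^12). -/
def gens : Fin 52 → (Fin 4 → ℤ) × (Fin 12 → ℤ) :=
  ![
    (Pi.single 0 1, 0),
    (Pi.single 0 1, Pi.single 11 1),
    (Pi.single 0 1, Pi.single 7 1),
    (Pi.single 0 1, Pi.single 6 1),
    (Pi.single 0 1, Pi.single 5 1),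
    (Pi.single 0 1, Pi.single 2 1),
    (Pi.single 0 1, Pi.single 0 1),
    (Pi.single 0 1, Pi.single 0 1 + Pi.single 11 1),
    (Pi.single 1 1, 0),
    (Pi.single 1 1, Pi.single 10 1),
    (Pi.single 1 1, Pi.single 9 1),
    (Pi.single 1 1, Pi.single 7 1),
    (Pi.single 1 1, Pi.single 6 1),
    (Pi.single 1 1, Pi.single 5 1),
    (Pi.single 1 1, Pi.single 4 1),
    (Pi.single 1 1, Pi.single 2 1),
    (Pi.single 1 1, Pi.single 1 1),
    (Pi.single 1 1, Pi.single 0 1),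
    (Pi.single 1 1, Pi.single 7 1 + Pi.single 10 1),
    (Pi.single 1 1, Pi.single 5 1 + Pi.single 10 1),
    (Pi.single 1 1, Pi.single 2 1 + Pi.single 10 1),
    (Pi.single 1 1, Pi.single 1 1 + Pi.single 10 1),
    (Pi.single 1 1, Pi.single 0 1 + Pi.single 10 1),
    (Pi.single 1 1, Pi.single 5 1 + Pi.single 9 1),
    (Pi.single 1 1, Pi.single 2 1 + Pi.single 9 1),
    (Pi.single 1 1, Pi.single 0 1 + Pi.single 9 1),
    (Pi.single 1 1, Pi.single 5 1 + Pi.single 7 1),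
    (Pi.single 1 1, Pi.single 4 1 + Pi.single 7 1),
    (Pi.single 1 1, Pi.single 0 1 + Pi.single 7 1),
    (Pi.single 1 1, Pi.single 0 1 + Pi.single 6 1),
    (Pi.single 1 1, Pi.single 1 1 + Pi.single 5 1),
    (Pi.single 1 1, Pi.single 0 1 + Pi.single 5 1),
    (Pi.single 1 1, Pi.single 0 1 + Pi.single 4 1),
    (Pi.single 1 1, Pi.single 0 1 + Pi.single 2 1),
    (Pi.single 1 1, Pi.single 0 1 + Pi.single 1 1),
    (Pi.single 1 1, Pi.single 0 2),
    (Pi.single 2 1, 0),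
    (Pi.single 2 1, Pi.single 9 1),
    (Pi.single 2 1, Pi.single 8 1),
    (Pi.single 2 1, Pi.single 7 1),
    (Pi.single 2 1, Pi.single 2 1),
    (Pi.single 2 1, Pi.single 1 1),
    (Pi.single 2 1, Pi.single 0 1),
    (Pi.single 2 1, Pi.single 2 1 + Pi.single 9 1),
    (Pi.single 3 1, 0),
    (Pi.single 3 1, Pi.single 5 1),
    (Pi.single 3 1, Pi.single 4 1),
    (Pi.single 3 1, Pi.single 3 1),
    (Pi.single 3 1, Pi.single 2 1),
    (Pi.single 3 1, Pi.single 1 1),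
    (Pi.single 3 1, Pi.single 0 1),
    (Pi.single 3 1, Pi.single 1 1 + Pi.single 5 1)]

abbrev DV := (Fin 4 → ℤ) × (Fin 12 → ℤ)
abbrev DQ := (Fin 4 → ℚ) × (Fin 12 → ℚ)

/-- A linear inequality `0 ≤ c · x` together with the bit naming it (`b`), the mask of generators
on which it vanishes (`m`, upper bits all set) and the mask of those where it equals one (`o`). -/
structure DRow where
  b : ℕ
  m : ℕ
  o : ℕ
  c : List ℤ

def dRows : List DRow := [
  ⟨0x10000000000000, 0x3ffffffffffffffffffffbfbf04dbdff3f, 0x40407b24200c0, [0,0,0,0,1,0,0,0,0,0,0,0,0,0,0,0]⟩,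
  ⟨0x20000000000000, 0x3ffffffffffffffffffff5fdfbbfdeffff, 0xa020440210000, [0,0,0,0,0,1,0,0,0,0,0,0,0,0,0,0]⟩,
  ⟨0x40000000000000, 0x3ffffffffffffffffffffef6fdfeef7fdf, 0x1090201108020, [0,0,0,0,0,0,1,0,0,0,0,0,0,0,0,0]⟩,
  ⟨0x80000000000000, 0x3fffffffffffffffffffff7fffffffffff, 0x800000000000, [0,0,0,0,0,0,0,1,0,0,0,0,0,0,0,0]⟩,
  ⟨0x100000000000000, 0x3fffffffffffffffffffffbffef7ffbfff, 0x400108004000, [0,0,0,0,0,0,0,0,1,0,0,0,0,0,0,0]⟩,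
  ⟨0x200000000000000, 0x3ffffffffffffffffffff7dfff3b77dfef, 0x82000c4882010, [0,0,0,0,0,0,0,0,0,1,0,0,0,0,0,0]⟩,
  ⟨0x400000000000000, 0x3fffffffffffffffffffffffffdfffeff7, 0x20001008, [0,0,0,0,0,0,0,0,0,0,1,0,0,0,0,0]⟩,
  ⟨0x800000000000000, 0x3fffffffffffffffffffffff7fe3fbf7fb, 0x801c040804, [0,0,0,0,0,0,0,0,0,0,0,1,0,0,0,0]⟩,
  ⟨0x1000000000000000, 0x3fffffffffffffffffffffffbfffffffff, 0x4000000000, [0,0,0,0,0,0,0,0,0,0,0,0,1,0,0,0]⟩,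
  ⟨0x2000000000000000, 0x3ffffffffffffffffffffff7dffc7ffbff, 0x82003800400, [0,0,0,0,0,0,0,0,0,0,0,0,0,1,0,0]⟩,
  ⟨0x4000000000000000, 0x3fffffffffffffffffffffffffff83fdff, 0x7c0200, [0,0,0,0,0,0,0,0,0,0,0,0,0,0,1,0]⟩,
  ⟨0x8000000000000000, 0x3fffffffffffffffffffffffffffffff7d, 0x82, [0,0,0,0,0,0,0,0,0,0,0,0,0,0,0,1]⟩,
  ⟨0x10000000000000000, 0x3fffffffffffffffffffffffffffffff82, 0x7d, [1,0,0,0,0,0,0,0,0,0,0,0,0,0,0,-1]⟩,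
  ⟨0x20000000000000000, 0x3ffffffffffffffffffffffff0007c02ff, 0xfff83fd00, [0,1,0,0,0,0,0,0,0,0,0,0,0,0,-1,0]⟩,
  ⟨0x40000000000000000, 0x3ffffffffffffffffffffff04fffffffff, 0xfb000000000, [0,0,1,0,0,0,0,0,0,0,0,0,-1,0,0,0]⟩,
  ⟨0x80000000000000000, 0x3ffffffffffffffffffff08fffffffffff, 0xf700000000000, [0,0,0,1,0,0,0,-1,0,0,0,0,0,0,0,0]⟩,
  ⟨0x100000000000000000, 0x3ffffffffffffffffffffffff0207c128a, 0xfdf83ed75, [1,1,0,0,0,0,0,0,0,0,-1,0,0,0,-1,-1]⟩,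
  ⟨0x200000000000000000, 0x3ffffffffffffffffffffff8e03f841c8e, 0x71fc07be371, [1,1,1,0,0,0,0,0,0,0,-1,-1,-1,-1,0,-1]⟩,
  ⟨0x400000000000000000, 0x3ffffffffffffffffffffff86023fc168a, 0x79fdc03e975, [1,1,1,0,0,0,0,0,0,0,-1,0,-1,-1,-1,-1]⟩,
  ⟨0x800000000000000000, 0x3ffffffffffffffffffffff86003fc06ff, 0x79ffc03f900, [0,1,1,0,0,0,0,0,0,0,0,0,-1,-1,-1,0]⟩,
  ⟨0x1000000000000000000, 0x3ffffffffffffffffffff8eff1ec88709a, 0x7100e13778f65, [1,1,0,1,0,0,0,-1,-1,-1,-1,0,0,0,0,-1]⟩,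
  ⟨0x2000000000000000000, 0x3ffffffffffffffffffff0cff1287c528a, 0xf300ed783ad75, [1,1,0,1,0,0,0,-1,-1,0,-1,0,0,0,-1,-1]⟩,
  ⟨0x4000000000000000000, 0x3ffffffffffffffffffff0cff1087c42ff, 0xf300ef783bd00, [0,1,0,1,0,0,0,-1,-1,0,0,0,0,0,-1,0]⟩,
  ⟨0x8000000000000000000, 0x3ffffffffffffffffffffaca654ba144ff, 0x5359ab45ebb00, [0,1,1,1,0,-1,0,-1,-1,0,0,0,-1,-1,0,0]⟩,
  ⟨0x10000000000000000000, 0x3ffffffffffffffffffff0c8610bfc46ff, 0xf379ef403b900, [0,1,1,1,0,0,0,-1,-1,0,0,0,-1,-1,-1,0]⟩,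
  ⟨0x20000000000000000000, 0x3ffffffffffffffffffff9e943ed98f0ba, 0x616bc12670f45, [1,1,1,1,0,0,-1,-1,-1,-1,-1,0,-1,0,0,-1]⟩,
  ⟨0x40000000000000000000, 0x3ffffffffffffffffffffbcb476931d0aa, 0x434b896ce2f55, [1,1,1,1,0,-1,-1,-1,-1,0,-1,0,-1,0,0,-1]⟩,
  ⟨0x80000000000000000000, 0x3ffffffffffffffffffffb8bc67d3598ae, 0x4743982ca6751, [1,1,1,1,0,-1,-1,-1,0,0,-1,-1,-1,0,0,-1]⟩,
  ⟨0x100000000000000000000, 0x3ffffffffffffffffffffa8ae47fa51c8e, 0x5751b805ae371, [1,1,1,1,0,-1,0,-1,0,0,-1,-1,-1,-1,0,-1]⟩,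
  ⟨0x200000000000000000000, 0x3ffffffffffffffffffff0c8612bfc568a, 0xf379ed403a975, [1,1,1,1,0,0,0,-1,-1,0,-1,0,-1,-1,-1,-1]⟩,
  ⟨0x400000000000000000000, 0x3ffffffffffffffffffffaca656ba1548a, 0x5359a945eab75, [1,1,1,1,0,-1,0,-1,-1,0,-1,0,-1,-1,0,-1]⟩,
  ⟨0x800000000000000000000, 0x3ffffffffffffffffffffdedcbbc5c00fc, 0x2123443a2fa03, [1,2,1,1,-1,0,-1,-1,-1,-1,-1,-1,-1,0,-1,0]⟩,
  ⟨0x1000000000000000000000, 0x3fffffffffffffffffffffcfcf387400ec, 0x3030c70bda13, [1,2,1,1,-1,-1,-1,-1,-1,0,-1,-1,-1,0,-1,0]⟩,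
  ⟨0x2000000000000000000000, 0x3ffffffffffffffffffff9e9c00c1c00be, 0x61633f1e0fa41, [1,2,1,1,0,0,-1,-1,-1,-1,-1,-1,-1,0,-1,-1]⟩,
  ⟨0x4000000000000000000000, 0x3ffffffffffffffffffffbcbc0083400ae, 0x434377549da51, [1,2,1,1,0,-1,-1,-1,-1,0,-1,-1,-1,0,-1,-1]⟩,
  ⟨0x8000000000000000000000, 0x3ffffffffffffffffffffeceed3a6400cc, 0x13112c59b5e33, [1,2,1,1,-1,-1,0,-1,-1,0,-1,-1,-1,-1,-1,0]⟩,
  ⟨0x10000000000000000000000, 0x3ffffffffffffffffffffacae00824008e, 0x5351577d95e71, [1,2,1,1,0,-1,0,-1,-1,0,-1,-1,-1,-1,-1,-1]⟩,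
  ⟨0x20000000000000000000000, 0x3ffffffffffffffffffffcece9becc00dc, 0x3131641327e23, [1,2,1,1,-1,0,0,-1,-1,-1,-1,-1,-1,-1,-1,0]⟩,
  ⟨0x40000000000000000000000, 0x3ffffffffffffffffffff8e8e00c8c009e, 0x71711f3707e61, [1,2,1,1,0,0,0,-1,-1,-1,-1,-1,-1,-1,-1,-1]⟩,
  ⟨0x80000000000000000000000, 0x3ffffffffffffffffffffbc840093400ae, 0x433a776c9de51, [1,2,2,1,0,-1,-1,-1,-1,0,-1,-1,-2,-1,-1,-1]⟩,
  ⟨0x100000000000000000000000, 0x3ffffffffffffffffffff9e8400d9c00be, 0x611a3f260fe41, [1,2,2,1,0,0,-1,-1,-1,-1,-1,-1,-2,-1,-1,-1]⟩,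
  ⟨0x200000000000000000000000, 0x3fffffffffffffffffffffc84f3b7400ec, 0x37a0c48bde13, [1,2,2,1,-1,-1,-1,-1,-1,0,-1,-1,-2,-1,-1,0]⟩,
  ⟨0x400000000000000000000000, 0x3ffffffffffffffffffffde84bbfdc00fc, 0x215a44022fe03, [1,2,2,1,-1,0,-1,-1,-1,-1,-1,-1,-2,-1,-1,0]⟩,
  ⟨0x800000000000000000000000, 0x3ffffffffffffffffffffac8600ba4048e, 0x5328574595a71, [1,2,2,1,0,-1,0,-1,-1,0,-1,-1,-2,-2,-1,-1]⟩,
  ⟨0x1000000000000000000000000, 0x3ffffffffffffffffffff88bc04c3c00be, 0x36437b1c1fa41, [1,2,1,2,0,-1,-1,-2,-1,-1,-1,-1,-1,0,-1,-1]⟩,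
  ⟨0x2000000000000000000000000, 0x3ffffffffffffffffffff88ae04cac009e, 0x26515b3517e61, [1,2,1,2,0,-1,0,-2,-1,-1,-1,-1,-1,-1,-1,-1]⟩,
  ⟨0x4000000000000000000000000, 0x3ffffffffffffffffffff88fcffc7c00fc, 0x760300383fa03, [1,2,1,2,-1,-1,-1,-2,-1,-1,-1,-1,-1,0,-1,0]⟩,
  ⟨0x8000000000000000000000000, 0x3ffffffffffffffffffff88eedfeec00dc, 0x6611201137e23, [1,2,1,2,-1,-1,0,-2,-1,-1,-1,-1,-1,-1,-1,0]⟩,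
  ⟨0x10000000000000000000000000, 0x3ffffffffffffffffffff8cb41483840ba, 0x324b6a5c5b245, [1,2,1,2,0,-1,-1,-2,-2,-1,-1,0,-1,0,-1,-1]⟩,
  ⟨0x20000000000000000000000000, 0x3ffffffffffffffffffff8ca6148a8409a, 0x22594a7553665, [1,2,1,2,0,-1,0,-2,-2,-1,-1,0,-1,-1,-1,-1]⟩,
  ⟨0x40000000000000000000000000, 0x3ffffffffffffffffffff9e9c02c1c108a, 0x61633d1e0ea34, [2,2,1,1,0,0,-1,-1,-1,-1,-2,-1,-1,0,-1,-2]⟩,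
  ⟨0x80000000000000000000000000, 0x3ffffffffffffffffffff8e8e02c8c108a, 0x71711d3706e14, [2,2,1,1,0,0,0,-1,-1,-1,-2,-1,-1,-1,-1,-2]⟩,
  ⟨0x100000000000000000000000000, 0x3ffffffffffffffffffffbcbc02834108a, 0x434375549ca24, [2,2,1,1,0,-1,-1,-1,-1,0,-2,-1,-1,0,-1,-2]⟩,
  ⟨0x200000000000000000000000000, 0x3ffffffffffffffffffffacae02824108a, 0x5351557d94e04, [2,2,1,1,0,-1,0,-1,-1,0,-2,-1,-1,-1,-1,-2]⟩,
  ⟨0x400000000000000000000000000, 0x3ffffffffffffffffffff8884ffffc00fc, 0x767a00003fe03, [1,2,2,2,-1,-1,-1,-2,-1,-1,-1,-1,-2,-1,-1,0]⟩,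
  ⟨0x800000000000000000000000000, 0x3ffffffffffffffffffff888404dbc00be, 0x363a7b241fe41, [1,2,2,2,0,-1,-1,-2,-1,-1,-1,-1,-2,-1,-1,-1]⟩,
  ⟨0x1000000000000000000000000000, 0x3ffffffffffffffffffff8c84149b840ba, 0x32326a645b645, [1,2,2,2,0,-1,-1,-2,-2,-1,-1,0,-2,-1,-1,-1]⟩,
  ⟨0x2000000000000000000000000000, 0x3ffffffffffffffffffff88bc06c3c108a, 0x3643791c1ea34, [2,2,1,2,0,-1,-1,-2,-1,-1,-2,-1,-1,0,-1,-2]⟩,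
  ⟨0x4000000000000000000000000000, 0x3ffffffffffffffffffff88ae06cac108a, 0x2651593516e14, [2,2,1,2,0,-1,0,-2,-1,-1,-2,-1,-1,-1,-1,-2]⟩,
  ⟨0x8000000000000000000000000000, 0x3ffffffffffffffffffff8cb416838508a, 0x324b685c5a230, [2,2,1,2,0,-1,-1,-2,-2,-1,-2,0,-1,0,-1,-2]⟩,
  ⟨0x10000000000000000000000000000, 0x3ffffffffffffffffffff8ca6168a8508a, 0x2259487552610, [2,2,1,2,0,-1,0,-2,-2,-1,-2,0,-1,-1,-1,-2]⟩,
  ⟨0x20000000000000000000000000000, 0x3ffffffffffffffffffffbc8402934108a, 0x433a756c9ce24, [2,2,2,1,0,-1,-1,-1,-1,0,-2,-1,-2,-1,-1,-2]⟩,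
  ⟨0x40000000000000000000000000000, 0x3ffffffffffffffffffff9e8402d9c108a, 0x611a3d260ee34, [2,2,2,1,0,0,-1,-1,-1,-1,-2,-1,-2,-1,-1,-2]⟩,
  ⟨0x80000000000000000000000000000, 0x3ffffffffffffffffffffac8602ba4148a, 0x5328554594a04, [2,2,2,1,0,-1,0,-1,-1,0,-2,-1,-2,-2,-1,-2]⟩,
  ⟨0x100000000000000000000000000000, 0x3ffffffffffffffffffff888406dbc108a, 0x363a79241ee34, [2,2,2,2,0,-1,-1,-2,-1,-1,-2,-1,-2,-1,-1,-2]⟩,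
  ⟨0x200000000000000000000000000000, 0x3ffffffffffffffffffff8c84169b8508a, 0x323268645a630, [2,2,2,2,0,-1,-1,-2,-2,-1,-2,0,-2,-1,-1,-2]⟩,
  ⟨0x400000000000000000000000000000, 0x3ffffffffffffffffffff8cbc0083c00be, 0x3243144404241, [1,3,1,2,0,-1,-1,-2,-2,-1,-1,-1,-1,0,-2,-1]⟩,
  ⟨0x800000000000000000000000000000, 0x3ffffffffffffffffffff8cae0082c009e, 0x2251144d04261, [1,3,1,2,0,-1,0,-2,-2,-1,-1,-1,-1,-1,-2,-1]⟩,
  ⟨0x1000000000000000000000000000000, 0x3ffffffffffffffffffff8cfc1087c00fc, 0x7203ef4004203, [1,3,1,2,-1,-1,-1,-2,-2,-1,-1,-1,-1,0,-2,0]⟩,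
  ⟨0x2000000000000000000000000000000, 0x3ffffffffffffffffffff8cee1086c00dc, 0x6211cf6904223, [1,3,1,2,-1,-1,0,-2,-2,-1,-1,-1,-1,-1,-2,0]⟩,
  ⟨0x4000000000000000000000000000000, 0x3ffffffffffffffffffff8c8610aec00dc, 0x6268cf5104623, [1,3,2,2,-1,-1,0,-2,-2,-1,-1,-1,-2,-2,-2,0]⟩,
  ⟨0x8000000000000000000000000000000, 0x3ffffffffffffffffffff8c86008ac009e, 0x2228147504661, [1,3,2,2,0,-1,0,-2,-2,-1,-1,-1,-2,-2,-2,-1]⟩,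
  ⟨0x10000000000000000000000000000000, 0x3ffffffffffffffffffff8cee1286c0088, 0x6211cd6905256, [2,3,1,2,-1,-1,0,-2,-2,-1,-2,-1,-1,-1,-2,-1]⟩,
  ⟨0x20000000000000000000000000000000, 0x3ffffffffffffffffffff8cfc1287c0088, 0x7203ed4005276, [2,3,1,2,-1,-1,-1,-2,-2,-1,-2,-1,-1,0,-2,-1]⟩,
  ⟨0x40000000000000000000000000000000, 0x3ffffffffffffffffffff8c8612aec0088, 0x6268cd5105656, [2,3,2,2,-1,-1,0,-2,-2,-1,-2,-1,-2,-2,-2,-1]⟩,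
  ⟨0x80000000000000000000000000000000, 0x3ffffffffffffffffffff8c84009bc00be, 0x3202146404641, [1,3,3,2,0,-1,-1,-2,-2,-1,-1,-1,-3,-2,-2,-1]⟩,
  ⟨0x100000000000000000000000000000000, 0x3ffffffffffffffffffff8c8410bfc00fc, 0x7202ef4004603, [1,3,3,2,-1,-1,-1,-2,-2,-1,-1,-1,-3,-2,-2,0]⟩,
  ⟨0x200000000000000000000000000000000, 0x3ffffffffffffffffffff8cbc0283c108a, 0x3243144404200, [3,3,1,2,0,-1,-1,-2,-2,-1,-3,-1,-1,0,-2,-3]⟩,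
  ⟨0x400000000000000000000000000000000, 0x3ffffffffffffffffffff8cae0282c108a, 0x2251144d04200, [3,3,1,2,0,-1,0,-2,-2,-1,-3,-1,-1,-1,-2,-3]⟩,
  ⟨0x800000000000000000000000000000000, 0x3ffffffffffffffffffff8c84029bc108a, 0x3202146404600, [3,3,3,2,0,-1,-1,-2,-2,-1,-3,-1,-3,-2,-2,-3]⟩,
  ⟨0x1000000000000000000000000000000000, 0x3ffffffffffffffffffff8c8412bfc0088, 0x7202ed4005676, [2,3,3,2,-1,-1,-1,-2,-2,-1,-2,-1,-3,-2,-2,-1]⟩,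
  ⟨0x2000000000000000000000000000000000, 0x3ffffffffffffffffffff8c86028ac108a, 0x2228147504600, [3,3,2,2,0,-1,0,-2,-2,-1,-3,-1,-2,-2,-2,-3]⟩]

def dDot : List ℤ → List ℤ → ℤ
  | a :: as, x :: xs => a * x + dDot as xs
  | _, _ => 0

def dCo (x : DV) : List ℤ :=
  [x.1 0, x.1 1, x.1 2, x.1 3, x.2 0, x.2 1, x.2 2, x.2 3, x.2 4, x.2 5, x.2 6, x.2 7, x.2 8,
    x.2 9, x.2 10, x.2 11]

def dS (c : List ℤ) (x : DV) : ℤ := dDot c (dCo x)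

def dCast (x : DV) : DQ := (fun i => (x.1 i : ℚ), fun i => (x.2 i : ℚ))

noncomputable def dP1L (i : Fin 4) : DQ →ₗ[ℚ] ℚ :=
  (LinearMap.proj i) ∘ₗ (LinearMap.fst ℚ (Fin 4 → ℚ) (Fin 12 → ℚ))

noncomputable def dP2L (i : Fin 12) : DQ →ₗ[ℚ] ℚ :=
  (LinearMap.proj i) ∘ₗ (LinearMap.snd ℚ (Fin 4 → ℚ) (Fin 12 → ℚ))

noncomputable def dDotL : List ℤ → List (DQ →ₗ[ℚ] ℚ) → (DQ →ₗ[ℚ] ℚ)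
  | a :: as, x :: xs => (a : ℚ) • x + dDotL as xs
  | _, _ => 0

noncomputable def dF (c : List ℤ) : DQ →ₗ[ℚ] ℚ :=
  dDotL c [dP1L 0, dP1L 1, dP1L 2, dP1L 3, dP2L 0, dP2L 1, dP2L 2, dP2L 3, dP2L 4, dP2L 5, dP2L 6,
    dP2L 7, dP2L 8, dP2L 9, dP2L 10, dP2L 11]

theorem dDotL_eq (y : DQ) (L : List (DQ →ₗ[ℚ] ℚ)) (l : List ℤ)
    (h : List.Forall₂ (fun f a => f y = ((a : ℤ) : ℚ)) L l) :
    ∀ c, dDotL c L y = (dDot c l : ℚ) := by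
  induction h with
  | nil => intro c; cases c <;> simp [dDotL, dDot]
  | cons h1 _ ih =>
    intro c
    cases c with
    | nil => simp [dDotL, dDot]
    | cons a as => simp [dDotL, dDot, h1, ih]

theorem dF_cast (c : List ℤ) (x : DV) : dF c (dCast x) = (dS c x : ℚ) := by
  apply dDotL_eq
  simp [dCo, dP1L, dP2L, dCast]

theorem dCast_sub (x y : DV) : dCast (x - y) = dCast x - dCast y := by
  ext i <;> simp [dCast]

theorem dS_sub (c : List ℤ) (x y : DV) : dS c (x - y) = dS c x - dS c y := by
  have h := dF_cast c (x - y)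
  rw [dCast_sub, map_sub, dF_cast, dF_cast] at h
  exact_mod_cast h.symm

theorem dCast_eq_zero {x : DV} (h : dCast x = 0) : x = 0 := by
  have h1 := congrArg Prod.fst h
  have h2 := congrArg Prod.snd h
  ext i
  · have := congrFun h1 i
    simpa [dCast] using this
  · have := congrFun h2 i
    simpa [dCast] using this

def DMem (x : DV) : Prop := ∃ c : Fin 52 → ℕ, x = ∑ t, (c t : ℤ) • gens t

theorem dMem_zero : DMem 0 := ⟨0, by simp⟩

theorem dMem_add {x : DV} (t : Fin 52) (h : DMem (x - gens t)) : DMem x := by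
  obtain ⟨c, hc⟩ := h
  refine ⟨c + Pi.single t 1, ?_⟩
  have : ∑ s, (((c + Pi.single t 1 : Fin 52 → ℕ) s : ℕ) : ℤ) • gens s
      = ∑ s, (c s : ℤ) • gens s + ∑ s, (((Pi.single t 1 : Fin 52 → ℕ) s : ℕ) : ℤ) • gens s := by
    rw [← Finset.sum_add_distrib]
    refine Finset.sum_congr rfl fun s _ => ?_
    rw [← add_smul]
    simp
  rw [this, ← hc, Finset.sum_eq_single t]
  · simp
  · intro s _ hs
    simp [Pi.single_eq_of_ne hs]
  · simp

/-- Every lattice point of a subspace of dimension at most `n` containing the generators named by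
the low bits of `P`, and satisfying the inequalities named by the high bits of `P`, is a sum of
generators. -/
def DGood (n : ℕ) (P : ℕ) : Prop :=
  ∀ W : Submodule ℚ DQ, Module.finrank ℚ W ≤ n →
    (∀ t : Fin 52, P.land (2 ^ t.1) ≠ 0 → dCast (gens t) ∈ W) →
    ∀ x : DV, dCast x ∈ W → (∀ r ∈ dRows, P.land r.b ≠ 0 → 0 ≤ dS r.c x) → DMem x

theorem dGood_zero (P : ℕ) : DGood 0 P := by
  intro W hW _ x hx _
  have hW' : W = ⊥ := Submodule.finrank_eq_zero.mp (Nat.le_zero.mp hW)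
  rw [hW', Submodule.mem_bot] at hx
  rw [dCast_eq_zero hx]
  exact dMem_zero

theorem land_right_ne {a b c : ℕ} (h : (a.land b).land c ≠ 0) : b.land c ≠ 0 := by
  intro h0
  apply h
  change (a &&& b) &&& c = 0
  change b &&& c = 0 at h0
  rw [Nat.and_assoc, h0, Nat.and_zero]

theorem land_left_ne {a b c : ℕ} (h : (a.land b).land c ≠ 0) : a.land c ≠ 0 := by
  have : a.land b = b.land a := Nat.and_comm a b
  rw [this] at h
  exact land_right_ne h

theorem dGood_mono {n Q T : ℕ} (hQ : DGood n Q) (h : Q.land T = Q) : DGood n T := by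
  intro W hW hG x hx hI
  refine hQ W hW (fun t ht => hG t ?_) x hx (fun r hr hb => hI r hr ?_)
  · rw [← h] at ht
    exact land_right_ne ht
  · rw [← h] at hb
    exact land_right_ne hb

/-- If-then-else on booleans, written with the recursor so that the kernel unfolds it quickly. -/
abbrev dIte (b t f : Bool) : Bool := @Bool.rec (fun _ => Bool) f t b

noncomputable def dAny (T : ℕ) (l : List ℕ) : Bool :=
  @List.rec ℕ (fun _ => Bool) false (fun Q _ ih => dIte ((Q.land T).beq Q) true ih) l

noncomputable def dChk (P vm : ℕ) (nx : List ℕ) (l : List DRow) : Bool :=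
  @List.rec DRow (fun _ => Bool) true (fun r _ ih =>
    dIte ((P.land r.b).beq 0) ih (dIte ((r.m.land vm).beq 0)
      (dIte ((r.o.land vm).beq 0) false (dIte (dAny (P.land r.m) nx) ih false)) ih)) l

noncomputable def dHas (P vm : ℕ) (l : List DRow) : Bool :=
  @List.rec DRow (fun _ => Bool) false (fun r _ ih =>
    dIte ((P.land r.b).beq 0) ih (dIte ((r.o.land vm).beq 0) ih true)) l

theorem dAny_cons (T Q : ℕ) (qs : List ℕ) :
    dAny T (Q :: qs) = ((Q.land T).beq Q || dAny T qs) := by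
  change dIte ((Q.land T).beq Q) true (dAny T qs) = _
  cases (Q.land T).beq Q <;> rfl

theorem dChk_cons (P vm : ℕ) (nx : List ℕ) (r : DRow) (rs : List DRow) :
    dChk P vm nx (r :: rs) = (((P.land r.b).beq 0 || !(r.m.land vm).beq 0 ||
      (!(r.o.land vm).beq 0 && dAny (P.land r.m) nx)) && dChk P vm nx rs) := by
  change dIte ((P.land r.b).beq 0) (dChk P vm nx rs) (dIte ((r.m.land vm).beq 0)
      (dIte ((r.o.land vm).beq 0) false (dIte (dAny (P.land r.m) nx) (dChk P vm nx rs) false))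
      (dChk P vm nx rs)) = _
  cases (P.land r.b).beq 0 <;> cases (r.m.land vm).beq 0 <;> cases (r.o.land vm).beq 0 <;>
    cases dAny (P.land r.m) nx <;> cases dChk P vm nx rs <;> rfl

theorem dHas_cons (P vm : ℕ) (r : DRow) (rs : List DRow) :
    dHas P vm (r :: rs) = ((!(P.land r.b).beq 0 && !(r.o.land vm).beq 0) || dHas P vm rs) := by
  change dIte ((P.land r.b).beq 0) (dHas P vm rs)
    (dIte ((r.o.land vm).beq 0) (dHas P vm rs) true) = _
  cases (P.land r.b).beq 0 <;> cases (r.o.land vm).beq 0 <;> cases dHas P vm rs <;> rfl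

noncomputable def dLvl (nx : List ℕ) : List ℕ → List ℕ → Bool
  | [], _ => true
  | _ :: _, [] => false
  | P :: Ps, v :: vs => (Nat.ble 52 v).not && !(P.land (2 ^ v)).beq 0 && dHas P (2 ^ v) dRows &&
      dChk P (2 ^ v) nx dRows && dLvl nx Ps vs

theorem dAny_sound {n T : ℕ} : ∀ l : List ℕ, (∀ Q ∈ l, DGood n Q) → dAny T l = true → DGood n T
  | [], _, h => by simp [dAny] at h
  | Q :: qs, hl, h => by
    simp only [dAny_cons, Bool.or_eq_true, Nat.beq_eq] at h
    rcases h with h | h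
    · exact dGood_mono (hl Q (by simp)) h
    · exact dAny_sound qs (fun R hR => hl R (by simp [hR])) h

theorem dChk_sound {P vm : ℕ} {nx : List ℕ} : ∀ l : List DRow, dChk P vm nx l = true →
    ∀ r ∈ l, P.land r.b ≠ 0 → r.m.land vm ≠ 0 ∨ (r.o.land vm ≠ 0 ∧ dAny (P.land r.m) nx = true)
  | [], _ => by simp
  | r :: rs, h => by
    simp only [dChk_cons, Bool.and_eq_true, Bool.or_eq_true, Bool.not_eq_true', Nat.beq_eq,
      ← Bool.not_eq_true] at h
    intro s hs hb
    rcases List.mem_cons.mp hs with rfl | hs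
    · tauto
    · exact dChk_sound rs h.2 s hs hb

theorem dHas_sound {P vm : ℕ} : ∀ l : List DRow, dHas P vm l = true →
    ∃ r ∈ l, P.land r.b ≠ 0 ∧ r.o.land vm ≠ 0
  | [], h => by simp [dHas] at h
  | r :: rs, h => by
    simp only [dHas_cons, Bool.and_eq_true, Bool.or_eq_true, Bool.not_eq_true', Nat.beq_eq,
      ← Bool.not_eq_true] at h
    rcases h with h | h
    · exact ⟨r, by simp, h⟩
    · obtain ⟨s, hs, h⟩ := dHas_sound rs h
      exact ⟨s, by simp [hs], h⟩

theorem dRows_valid : ∀ t : Fin 52, ∀ r ∈ dRows,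
    (r.m.land (2 ^ t.1) ≠ 0 → dS r.c (gens t) = 0) ∧
    (r.o.land (2 ^ t.1) ≠ 0 → dS r.c (gens t) = 1) := by
  decide +kernel

theorem dStep {n P : ℕ} {nx : List ℕ} (t : Fin 52) (hnx : ∀ Q ∈ nx, DGood n Q)
    (hP : P.land (2 ^ t.1) ≠ 0) (hh : dHas P (2 ^ t.1) dRows = true)
    (hc : dChk P (2 ^ t.1) nx dRows = true) : DGood (n + 1) P := by
  intro W hW hG
  obtain ⟨r0, hr0, hr0b, hr0o⟩ := dHas_sound _ hh
  have hc' := dChk_sound _ hc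
  have key : ∀ N : ℕ, ∀ x : DV, (dS r0.c x).toNat ≤ N → dCast x ∈ W →
      (∀ r ∈ dRows, P.land r.b ≠ 0 → 0 ≤ dS r.c x) → DMem x := by
    intro N
    induction N with
    | zero => ?_
    | succ N ih => ?_
    all_goals
      intro x hN hx hI
      by_cases hz : ∃ r ∈ dRows, P.land r.b ≠ 0 ∧ r.m.land (2 ^ t.1) = 0 ∧ dS r.c x = 0
      · obtain ⟨r, hr, hb, hm, h0⟩ := hz
        rcases hc' r hr hb with h | ⟨ho, ha⟩
        · exact absurd hm h
        have hgood : DGood n (P.land r.m) := dAny_sound _ hnx ha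
        have h1 : dS r.c (gens t) = 1 := (dRows_valid t r hr).2 ho
        refine hgood (W ⊓ LinearMap.ker (dF r.c)) ?_ ?_ x ?_ ?_
        · have hlt : W ⊓ LinearMap.ker (dF r.c) < W := by
            refine lt_of_le_of_ne inf_le_left fun he => ?_
            have hm' : dCast (gens t) ∈ W ⊓ LinearMap.ker (dF r.c) := by
              rw [he]; exact hG t hP
            have h2 := LinearMap.mem_ker.mp hm'.2
            rw [dF_cast, h1] at h2
            norm_num at h2
          have := Submodule.finrank_lt_finrank_of_lt hlt
          omega
        · intro s hs
          refine ⟨hG s (land_left_ne hs), ?_⟩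
          rw [SetLike.mem_coe, LinearMap.mem_ker, dF_cast,
            (dRows_valid s r hr).1 (land_right_ne hs)]
          norm_num
        · refine ⟨hx, ?_⟩
          rw [SetLike.mem_coe, LinearMap.mem_ker, dF_cast, h0]
          norm_num
        · intro s hs hsb
          exact hI s hs (land_left_ne hsb)
      · push Not at hz
        have h0m : r0.m.land (2 ^ t.1) = 0 := by
          by_contra hne
          have h1 := (dRows_valid t r0 hr0).1 hne
          have h2 := (dRows_valid t r0 hr0).2 hr0o
          omega
        have hr0z := hz r0 hr0 hr0b h0m
        have hr0n := hI r0 hr0 hr0b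
        have hr01 := (dRows_valid t r0 hr0).2 hr0o
        first
        | (exfalso; omega)
        | (refine dMem_add t (ih _ ?_ ?_ ?_)
           · rw [dS_sub]; omega
           · rw [dCast_sub]; exact W.sub_mem hx (hG t hP)
           · intro r hr hb
             rw [dS_sub]
             have hn := hI r hr hb
             by_cases hm : r.m.land (2 ^ t.1) = 0
             · have hne := hz r hr hb hm
               rcases hc' r hr hb with h | ⟨ho, _⟩
               · exact absurd hm h
               · rw [(dRows_valid t r hr).2 ho]; omega
             · rw [(dRows_valid t r hr).1 hm]; omega)
  intro x hx hI
  exact key _ x le_rfl hx hI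

theorem dLvl_sound (n : ℕ) (nx : List ℕ) : ∀ (Ps vs : List ℕ), dLvl nx Ps vs = true →
    (∀ Q ∈ nx, DGood n Q) → ∀ P ∈ Ps, DGood (n + 1) P
  | [], _, _, _ => by simp
  | _ :: _, [], h, _ => by simp [dLvl] at h
  | P :: Ps, v :: vs, h, hnx => by
    simp only [dLvl, Bool.and_eq_true, Bool.not_eq_true', ← Bool.not_eq_true, Nat.beq_eq,
      Nat.ble_eq] at h
    obtain ⟨⟨⟨⟨hv, hP⟩, hh⟩, hc⟩, hr⟩ := h
    intro Q hQ
    rcases List.mem_cons.mp hQ with rfl | hQ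
    · exact dStep ⟨v, by omega⟩ hnx hP hh hc
    · exact dLvl_sound n nx Ps vs hr hnx Q hQ


def dP16 : List ℕ := [
  0x3fffffffffffffffffffffffffffffffff]

def dV16 : List ℕ := [
  38]

def dP15 : List ℕ := [
  0x3fffffffffffffffffefffffbfffffffff]

def dV15 : List ℕ := [
  47]

def dP14 : List ℕ := [
  0x3fffffffffffffffffef7f7fbfffffffff]

def dV14 : List ℕ := [
  3]

def dP13 : List ℕ := [
  0x18fc01c3ffff9fdafeb7f7fbfdfffeff7, 0x3e703fe7cc629fe37cef7f7fbfffffff82]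

def dV13 : List ℕ := [
  7, 7]

def dP12 : List ℕ := [
  0x88c018339d61fdafeb6b7bb04dbdef37, 0x10700143ce299fdaf6b7f7fbfdfffef75, 0x2e003fe3c00007e37cef6b7bb04dbdff02,
  0x3e703fe7cc629fe37c6f7f7fbfffffff00]

def dV12 : List ℕ := [
  1, 43, 1, 29]

def dP11 : List ℕ := [
  0x10000140018ed2f4b7f779fdc7feb75, 0x600002882811daf6b3e76bddeef6f55, 0x88c018339d61fdaf6b6b7bb04dbdef35,
  0x100001400e001f8a96b7f700fdfffef75, 0x107029840c629fe37c6b7f7fbfdfffef00, 0x2e003fe3c00007e37c6f6b7bb04dbdff00]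

def dV11 : List ℕ := [
  27, 37, 43, 24, 43, 12]

def dP10 : List ℕ := [
  0x40018a92f4a7f379ed47fab75, 0x4000110060ed2f4b6b73904c3deb35, 0x100000000180d254b7f7790007c0275,
  0x100001400186d0f437f771fc07be371, 0x200002802810d2f4b3e769ddc6f6b55, 0x4000028828119a96b3e700ddeef6f55,
  0x880002285011daf6b2a72b04cad6f15, 0x200080040018e33c4b7f779fdc7feb00, 0x500900080287037c6b3e76bddeef6f00,
  0x800018009801f8a96b6b70004dbdef35, 0x1000014006000f8a94b7f700fdc7feb75, 0x100001400e00138a96b3e700ddeef6f55,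
  0x10002804006007e0686b7f700fdfffef00, 0x2e003fe3c00007e37c6b6b7bb04dbdef00]

def dV10 : List ℕ := [
  51, 27, 46, 32, 27, 27, 37, 40, 37, 24, 5, 23, 24, 43]

def dP9 : List ℕ := [
  0x8a12f4a55359a945eab75, 0x10882f4877179e10778b65, 0x188014437f70801c040800,
  0x60008081437f70001c040804, 0xa00118a96936500d1a674f45, 0x10020a92f4a6b3390443dab35,
  0x40000a9074a70079ed47fab75, 0x40018690f427f371ec07ba371, 0x80281092f4a3e369cd46f2b55,
  0x8028109a96a3e300cd6ef2f55, 0x1000006d0f436b73104039e331, 0x40000000600d254b6b7390003c0235,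
  0x80002205010d2f4b2a72904c2d6b15, 0x100000000180d05437f771000780271, 0x100000000180d254a7f3790007c0275,
  0x200000002800d254b3e7690006c0255, 0x200002802800d0f433e761dc06b6351, 0x4000000828018216b3e700002ec0655,
  0x400002802801989633e700dc2eb6751, 0x8000022840119a96b2a70004cad6f15, 0x100100080285033c4b3e769ddc6f6b00,
  0x200080040018c33c4b3e769ddc6f6b00, 0x200080040018e2384b7f700fdc7feb00, 0x40090008028701686b3e700ddeef6f00,
  0x800018001800f8a94b6b70004c3deb35, 0x80001800900138a96b2a70004cad6f15, 0x100000400c00108a16b0e400d1a640044,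
  0x1000014006000b8a94b3e700ddc6f6b55, 0x1000014006000f0a84b7f700fdc7feb00, 0x100001400600138a94b3e700ddc6f6b55,
  0x20000a1400000e33c4b6b73904c3deb00, 0x8003e00000007e0686b6b70004dbdef00, 0x10002004006002e0684b7f700fdc7feb00,
  0x1000280400600720686b3e700ddeef6f00, 0x24000942800007037c6b2a72b04cad6f00]

def dV9 : List ℕ := [
  26, 2, 39, 2, 25, 51, 40, 51, 39, 2, 14, 46, 27, 46, 39, 46, 32, 2, 32, 23, 27, 27, 20, 27, 5, 23, 25, 27, 20, 27,
  40, 24, 20, 27, 37]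

def dP8 : List ℕ := [
  0x882f4863139000358b25, 0x8012d4a553590005c0275, 0x8210f4255351a805aa371,
  0x8802f4855159a10568b65, 0x10480f4077171e00738361, 0x10802e4877179e10778b00,
  0x10880f4077171e00738361, 0x188010437f70001c040800, 0x20a12f4a413190041cab35,
  0x18008081436b70000c040804, 0x200118a94936500d18674b45, 0x60008040437f70001c040800,
  0x60008080437f70001c040800, 0x800118a96922500008254f05, 0x10000a9074a600390443dab35,
  0x20401092f4a2a3290442d2b15, 0x4000069074270071ec07ba371, 0x4000080064a50020440210075,
  0x4000089074a30069cd46f2b55, 0x40000a8034a70000ed47fab75, 0x40018813c4a3e369cd46f2b00,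
  0x40018e0280b7f700fdc03e900, 0x80081000e4a1a020440210055, 0x80200000968382000c4882010,
  0x80280090f423e361cc06b2351, 0x802800989623e300cc2eb2751, 0x80281013c4a3e369cd46f2b00,
  0x8028101686a3e300cd6ef2f00, 0x8028101a86a3e300cd6ef2f00, 0x80281092b4a3e300cd46f2b55,
  0x100000690f426b33104039a331, 0x1000006d05436b731000380231, 0x2000000d0f432a721040296311,
  0x2000001989632a700040a96711, 0x14000008014436b70800c040800, 0x4006000a8a94a3e300cd46f2b55,
  0x4006000e0280b7f700fdc03e900, 0x400600120686a3e300cd6ef2f00, 0x400600128a94a3e300cd46f2b55,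
  0x40000000600d254a6b3390003c0235, 0x80000005000d254b2a7290002c0215, 0x1000000001004044a5a020000200075,
  0x100000000180c214a7f3000007c0275, 0x100000000180d05427f371000780271, 0x200000002800d05433e761000680251,
  0x200000002800d254a3e3690006c0255, 0x400000002801801633e700002e80651, 0x4000000828010202b3e700002ec0600,
  0x8000022840119a94b2a70004c2d6b15, 0x10000000028003244b3e7690006c0200, 0x100100080284031c433e761dc06b6300,
  0x20000000001803244b3e7690006c0200, 0x200080040018431c433e761dc06b6300, 0x200080040018e2384b3e700ddc6f6b00,
  0x4001000802860148633e700dc2eb6700, 0x40080000028200202b3e700002ec0600, 0x800018001800b8a94b2a70004c2d6b15,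
  0x800018001800f0a84b6b70004c3deb00, 0x80001800900138a94b2a70004c2d6b15, 0x100000000600018214b3e7000006c0255,
  0x100000400c00108a14b0e400d18640044, 0x10000140060003889433e700dc06b6351, 0x1000014006000f0a84b3e700ddc6f6b00,
  0x20000a1400000c33c4b2a72904c2d6b00, 0x20000a1400000e2384b6b70004c3deb00, 0x4000142800005033c4b2a72904c2d6b00,
  0x8003600000002e0684b6b70004c3deb00, 0x8003c0000000720686b2a70004cad6f00, 0x1000080000600200202b3e700002ec0600,
  0x10002004006002e0684b3e700ddc6f6b00, 0x100020040060062048633e700dc2eb6700, 0x2000094080000701686b2a70004cad6f00]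

def dV8 : List ℕ := [
  49, 45, 42, 28, 5, 39, 5, 48, 26, 2, 2, 48, 48, 2, 30, 39, 5, 5, 39, 5, 39, 27, 41, 23, 41, 6, 39, 18, 18, 18,
  51, 46, 14, 23, 39, 2, 27, 18, 2, 39, 46, 2, 2, 42, 46, 2, 46, 46, 27, 39, 32, 39, 32, 27, 46, 18, 27, 20, 27, 2,
  51, 32, 27, 27, 20, 27, 20, 23, 18, 27, 32, 23]

def dP7 : List ℕ := [
  0x18896122500000214701, 0x210f424131100018a331, 0x480f4063131000318321,
  0x802f4841119000148b25, 0x88074860039000358b25, 0xe0280b6b70004c01e900,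
  0x8002d4855159000540265, 0x801054a500590005c0275, 0x8010d421121028018a030,
  0x8200b4255300a805aa371, 0x8800f4055151a00528361, 0x10080f4036161c00630341,
  0x10400e4077171e00738300, 0x10800e4077171e00738300, 0x10802a4877100e10778b00,
  0x188010433e70001c040800, 0x20012d4a413190001c0235, 0x200010f42143418804a2351,
  0x18008080436b70000c040800, 0x200018894136500d00634341, 0x200118a84936500d18674b00,
  0x60008040433e70001c040800, 0x60008080433e70001c040800, 0x800118a86922500008254f00,
  0x1000009054a600390003c0235, 0x10000a1074a400190041cab35, 0x20000090f422a321040292311,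
  0x20001000e4a0a020040210015, 0x20401092b4a2a3000442d2b15, 0x2040109a94a2a3000442d2b15,
  0x4000009074230061cc06b2351, 0x40000200340700710c0082010, 0x4000061064270071ec07ba300,
  0x4000080064a10020440210055, 0x4000089034a30000cd46f2b55, 0x40000a0024a70000ed47fab00,
  0x40000a8034a30000cd46f2b55, 0x40018411c423e361cc06b2300, 0x400186028037f700fc003e100,
  0x40018811c423e361cc06b2300, 0x4001881384a3e300cd46f2b00, 0x40018a0280a7f300ed403a900,
  0x40018a0384a3e300cd46f2b00, 0x800000989622a300040a92711, 0x800800107402c240880480050,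
  0x80081000a4a1a000440210055, 0x80200000868382000c4882000, 0x80200000948382000c4082010,
  0x80200000960382000c0882010, 0x80280090b423e300cc06b2351, 0x802800988623e300cc2eb2700,
  0x80281011c423e361cc06b2300, 0x8028101282a3e300cd6832d00, 0x8028101384a3e300cd46f2b00,
  0x802810148623e300cc2eb2700, 0x802810188623e300cc2eb2700, 0x80281092b0a3e300cd4032955,
  0x80284011c423e361cc06b2300, 0x802840148623e300cc2eb2700, 0x1000006907426003104039a331,
  0x1000006d05426b331000380231, 0x200000090f422a321040292311, 0x2000000d05432a721000280211,
  0x2000001989432a700040296311, 0x14000008010436b70000c040800, 0x4004000000868382000c4882000,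
  0x4004000000948382000c4082010, 0x40060002889423e300cc06b2351, 0x40060006028037f700fc003e100,
  0x4006000a0280a7f300ed403a900, 0x4006000a0684a3e300cd46f2b00, 0x4006000a0a84a3e300cd46f2b00,
  0x400600120282a3e300cd6832d00, 0x40060012048623e300cc2eb2700, 0x400600120a84a3e300cd46f2b00,
  0x40060042048623e300cc2eb2700, 0x8001000a8a94a2a3000442d2b15, 0x800100128a94a2a3000442d2b15,
  0x100000003889432a700040296311, 0x20400000813c4a2a3290442d2b00, 0x40800001013c4a2a3290442d2b00,
  0x80000000431c432a721040296300, 0x100000004031c432a721040296300, 0x10008000601006330000dc2eb6700,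
  0x6000000008040436b70000c040800, 0x80000000700686922500008254f00, 0x20000000062048632a700040a96700,
  0x400000004004044a4a020000200035, 0x40000000600c214a6b3000003c0235, 0x40000000600d05426b331000380231,
  0x80000005000d254a2a3290002c0215, 0x100000000100404425a020000200071, 0x1000000001804200a7f3000007c0200,
  0x100000000180c01427f300000780271, 0x100000000180d05426b331000380231, 0x2000000020004014838269000080010,
  0x2000000028005244a3e3690006c0200, 0x200000002800d05423e361000680251, 0x400000002801801623e300002e80651,
  0x4000000828010202a3e300002ec0600, 0x8000000840018214b2a7000002c0215, 0x10000000028002200b3e7000006c0200,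
  0x1000000002800304433e761000680200, 0x20000000001802200b3e7000006c0200, 0x2000000000180304433e761000680200,
  0x2000800400186218433e700dc06b6300, 0x40010000028401086108000dc2e80000, 0x4008000002820020233e700002e80600,
  0x80000000180018214b2a7000002c0215, 0x80000000900018214b2a7000002c0215, 0x800018001800f0a84b2a70004c2d6b00,
  0x100000000600010200b3e7000006c0200, 0x10000000060001801433e700000680251, 0x100000400c00108a14906400d18640044,
  0x10000140060007088433e700dc06b6300, 0x200000140000003244b2a7290002c0200, 0x20000a1400000e2384b2a70004c2d6b00,
  0x400000280000003244b2a7290002c0200, 0x8003600000002e0684b2a70004c2d6b00, 0x8003c0000000720684b2a70004c2d6b00,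
  0x1000000000600200200b3e7000006c0200, 0x100000000060060000633e700002e80600, 0x100008000060020020233e700002e80600,
  0x100020040060026048433e700dc06b6300, 0x2000094080000701684b2a70004c2d6b00]

def dV7 : List ℕ := [
  10, 40, 48, 44, 16, 27, 48, 19, 40, 4, 40, 6, 40, 40, 18, 18, 45, 42, 18, 6, 18, 18, 18, 10, 41, 26, 41, 21, 2, 2,
  41, 4, 20, 41, 18, 20, 2, 41, 32, 41, 26, 51, 26, 4, 42, 21, 23, 19, 4, 21, 25, 41, 25, 18, 25, 25, 2, 41, 25, 30,
  51, 4, 46, 4, 18, 23, 4, 51, 33, 33, 18, 18, 23, 51, 18, 51, 2, 2, 4, 39, 39, 41, 41, 14, 48, 10, 23, 2, 2, 40,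
  39, 6, 18, 6, 40, 39, 39, 6, 6, 18, 46, 46, 46, 18, 46, 32, 32, 46, 2, 46, 27, 46, 46, 2, 32, 39, 27, 46, 27, 27,
  46, 25, 46, 32, 51]

def dP6 : List ℕ := [
  0x2f4801018000148824, 0x10f4200301000082311, 0x31c4300701000086300,
  0x80f4022121000210301, 0x8896022100000210701, 0x18894122500000214301,
  0x200b424130000018a331, 0x2107424001100018a331, 0x25054241311000180231,
  0x400e4042020000210021, 0x48074060031000318321, 0x4c054063131000300221,
  0x6028036b70004001e100, 0x80074840019000148b25, 0x88054860039000340225,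
  0xa0280a6b30004401a900, 0x101282a2a300044812d00, 0x600486122500000214700,
  0x800054850059000540265, 0x8000f4014141800420341, 0x8002d4814149000440245,
  0x801040a50059000000075, 0x80109421120028018a030, 0x8011c42143418804a2300,
  0x8200a4255300a805aa300, 0x8200b4055100a00528361, 0x8800b4055100a00528361,
  0x8a0280a55300a9402a900, 0x10080e4036161c00630300, 0x10400a4077100e00738300,
  0x10400e4036161c00630300, 0x10800a4077100e00738300, 0x10800e4036161c00630300,
  0x1080280877100e10038900, 0x1080384836100c10670b00, 0x180000037f700000000000,
  0x188010033e70001c000800, 0x20002d4841119000140225, 0x2001054a400190001c0235,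
  0x200010b42143008804a2351, 0x200011c42143418804a2300, 0x18008080036b70000c000800,
  0x200008894036100c00630341, 0x200018884136500d00634300, 0x200100282836100c12030d00,
  0x200100486036100c02630700, 0x200108280936500d18034900, 0x200110084812400508214000,
  0x200400486036100c02630700, 0x400020486214300882ca2700, 0x4000208942143008804a2351,
  0x60000000037f700000000000, 0x600080000a7f300014000800, 0x60008040033e70001c000800,
  0x60008080033e70001c000800, 0x800118a84922500008254b00, 0x1000001054a400190001c0235,
  0x1000008010a600000003c0235, 0x20000090b422a300040292311, 0x200000989422a300040292311,
  0x20001000e0a0a020040010015, 0x2040000094828200044082010, 0x20401012a4a2a3000442d2b00,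
  0x2040101a84a2a3000442d2b00, 0x40000000148300000c4082010, 0x40000010742100418804a2351,
  0x4000009034230000cc06b2351, 0x40000200240700710c0082000, 0x4000028034230000cc06b2351,
  0x4000041064230061cc06b2300, 0x4000061040270071ec003a100, 0x4000080024a10000440210055,
  0x4000089010a30000cd4032955, 0x40000a0000a70000ed403a900, 0x40000a0024a30000cd46f2b00,
  0x4000880304a0e000c10640000, 0x400100114402c240880480000, 0x4001800280a3e3000006c0200,
  0x400184118423e300cc06b2300, 0x400186018423e300cc06b2300, 0x400186028027f300ec003a100,
  0x400188118423e300cc06b2300, 0x40018a018423e300cc06b2300, 0x800000988622a300040a92700,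
  0x800010148622a300040a92700, 0x800010188622a300040a92700, 0x800040148622a300040a92700,
  0x8000601006230000cc2eb2700, 0x800800103402c200880480050, 0x800800114402c240880480000,
  0x80081000a0a1a000440010055, 0x80200000828382000c4802000, 0x80200000848382000c4082000,
  0x80200000860382000c0882000, 0x80200000908382000c4002010, 0x80200000940382000c0082010,
  0x80280090b023e300cc0032151, 0x802800988423e300cc06b2300, 0x802810118423e300cc06b2300,
  0x8028101280a3e300cd4032900, 0x802810148423e300cc06b2300, 0x802810188423e300cc06b2300,
  0x802840118423e300cc06b2300, 0x802840148423e300cc06b2300, 0x10000009054260031000380231,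
  0x200000090e422a321040292300, 0x2000000d05422a321000280211, 0x2000001988432a700040296300,
  0x80000201684b0070000c0c6b00, 0x14000008010036b70000c000800, 0x400000028814230000cc06b2351,
  0x400000120406230000cc2eb2700, 0x400000420406230000cc2eb2700, 0x4004000000848382000c4082000,
  0x400400100202a0e000c12000000, 0x40060006028033e700dc0036100, 0x40060006048423e300cc06b2300,
  0x40060006088423e300cc06b2300, 0x4006000a0280a3e300cd4032900, 0x4006000a048423e300cc06b2300,
  0x4006000a088423e300cc06b2300, 0x400600120280a3e300cd4032900, 0x40060012088423e300cc06b2300,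
  0x80000002889422a300040292311, 0x800100000094828200044082010, 0x8001000a0a84a2a3000442d2b00,
  0x800100120a84a2a3000442d2b00, 0x100000003888432a700040296300, 0x100000007088432a700040296300,
  0x20000000811c422a321040292300, 0x2040000081384a2a3000442d2b00, 0x20400000a0384a2a3000442d2b00,
  0x40000001011c422a321040292300, 0x4080000101384a2a3000442d2b00, 0x800000004318432a700040296300,
  0x800000006218432a700040296300, 0x1000000040318432a700040296300, 0x10000000601006320000dc2e80000,
  0x14000000701004b2000004c2d6b00, 0x6000000008040432a70000c040800, 0x80000000700684922500008254b00,
  0x1400000000a0684a2a3000442d2b00, 0x140000000120684a2a3000442d2b00, 0x20000000026048432a700040296300,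
  0x20000000062048432a700040296300, 0x40000000000d05422a321000280211, 0x40000000400404424a020000200031,
  0x400000006004200a6b3000003c0200, 0x40000000600c01426b300000380231, 0x80000000000d05422a321000280211,
  0x800000010004044a0a020000200015, 0x80000005000c214a2a3000002c0215, 0x100000000000d05422a321000280211,
  0x100000000100404424a020000200031, 0x100000000180400427f300000780200, 0x100000000180420027f300000780200,
  0x100000000180c01426b300000380231, 0x200000000000d05422a321000280211, 0x2000000020004014038261000080010,
  0x2000000028004200a3e3000006c0200, 0x200000002800504423e361000680200, 0x400000002001801622a300000a80611,
  0x400000002801800623e300002e80600, 0x400000082801020223e300002e80600, 0x8000000840018214a2a3000002c0215,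
  0x10000000028002200a3e3000006c0200, 0x1000000002800304423e361000680200, 0x2000000000180200433e700000680200,
  0x2000000000180220033e700000680200, 0x2000000000180304423e361000680200, 0x40010000028401086008000cc2e80000,
  0x4008000002820020223e300002e80600, 0x8000000010001801432a700000280211, 0x80000000180010200b2a7000002c0200,
  0x80000000900018214a2a3000002c0215, 0x10000000060001000433e700000680200, 0x100000000600010200a3e3000006c0200,
  0x10000000060001801423e300000680251, 0x100000400400008814106400d00600040, 0x100000400c00108a04906400d18640000,
  0x20000010000000304432a721000280200, 0x200000140000002200b2a7000002c0200, 0x400000280000003244a2a3290002c0200,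
  0x800060000000200200b2a7000002c0200, 0x8000c0000000200200b2a7000002c0200, 0x100000000040060000632a700000a80600,
  0x100000000060020000433e700000680200, 0x1000000000600200200a3e3000006c0200, 0x100008000060020020223e300002e80600,
  0x2000010000000000480a204000082c4200]

def dV6 : List ℕ := [
  11, 45, 36, 49, 10, 0, 44, 40, 40, 49, 15, 49, 48, 8, 21, 48, 23, 10, 5, 42, 50, 4, 5, 42, 45, 5, 48, 26, 41, 20,
  41, 20, 41, 48, 18, 46, 28, 44, 19, 45, 42, 48, 6, 32, 25, 25, 27, 21, 25, 23, 4, 48, 48, 27, 28, 27, 40, 21, 4, 4,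
  41, 4, 18, 18, 4, 6, 4, 19, 4, 21, 40, 21, 30, 33, 21, 51, 51, 18, 51, 51, 51, 51, 51, 23, 23, 23, 23, 23, 51, 42,
  2, 23, 19, 23, 26, 19, 6, 22, 21, 28, 22, 22, 21, 22, 4, 41, 41, 14, 46, 48, 4, 23, 23, 19, 25, 32, 51, 51, 28, 51,
  51, 28, 51, 4, 4, 18, 18, 14, 14, 41, 26, 26, 41, 18, 14, 46, 21, 32, 27, 18, 27, 18, 18, 46, 46, 41, 41, 18, 5, 41,
  41, 18, 41, 5, 22, 20, 5, 41, 19, 18, 42, 4, 25, 25, 2, 18, 42, 46, 46, 42, 51, 25, 46, 18, 2, 46, 18, 6, 6, 27,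
  46, 46, 39, 46, 18, 46, 22, 18, 25, 19]

def dP5 : List ℕ := [
  0x74840018000148824, 0xb424120000018a030, 0xf4000101000000301,
  0xf4001010000108020, 0x2d4800109000040205, 0x2d4801018000140024,
  0x1074200001000082311, 0x10e4200301000082300, 0x11c4200301000082300,
  0x3184300700000086300, 0x5054200301000080211, 0x8074020021000210301,
  0x80b4022100000210301, 0x8886022100000210700, 0x8894022100000210301,
  0x90b022a300040012111, 0x18016022100000200601, 0x18884122500000214300,
  0x2003424000000018a331, 0x24014241300000180231, 0x40064040020000210021,
  0x44054041111000100221, 0x48054060031000300221, 0x6000036000004001e100,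
  0x6028032a700040016100, 0x80054840019000140225, 0x80384822100000250b00,
  0x88010860039000000025, 0xa0000a6000004401a900, 0xa0280a2a300044012900,
  0x100282822100000010d00, 0x100486022100000210700, 0x100684822100000250b00,
  0x100886022100000210700, 0x100a84822100000250b00, 0x101280a2a300044012900,
  0x120280a2a300044012900, 0x400486022100000210700, 0x40118032a700040016100,
  0x600484122500000214300, 0x800044850059000540200, 0x800054810049000440245,
  0x800094010200080082010, 0x8000b4014100800420341, 0x801040850059000000065,
  0x80108421120028018a000, 0x8011842143008804a2300, 0x820024250000a805aa300,
  0x8200a4055100a00528300, 0x8201842143008804a2300, 0x820280255300a8002a100,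
  0x880034050000a00528361, 0x880280855100a10028900, 0x10000e4014141800420300,
  0x10080a4036100c00630300, 0x10400a0077100e00038100, 0x10400a4036100c00630300,
  0x1040184036100c00630300, 0x1040280077100e00038100, 0x1080000870000e10038900,
  0x10800a0077100e00038100, 0x10800a4036100c00630300, 0x1080184036100c00630300,
  0x1080280836100c10030900, 0x180000027f300000000000, 0x180000033e700000000000,
  0x188010032a70000c000800, 0x2000054840019000140225, 0x2001040a40019000000035,
  0x200000b4014100800420341, 0x200010342100008804a2351, 0x200011842143008804a2300,
  0x40008200a2a300000000015, 0x18008080032a70000c000800, 0x200008280136500d00034100,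
  0x200008884036100c00630300, 0x200010004136500000600200, 0x200040484036100c00630300,
  0x200040884036100c00630300, 0x200080484036100c00630300, 0x200080884036100c00630300,
  0x200100280836100c10030900, 0x200100484036100c00630300, 0x200100884036100c00630300,
  0x200110080812400508014000, 0x200400484036100c00630300, 0x400000486014100802420700,
  0x400000894014100800420341, 0x4000204842143008804a2300, 0x4000208842143008804a2300,
  0x60000000033e700000000000, 0x600080000a3e300014000800, 0x60008040023e300014000800,
  0x60008080032a70000c000800, 0x800010200922500000240200, 0x1000000014a400000001c0235,
  0x1000001054a000090000c0215, 0x1000008010a400000001c0235, 0x20000090a422a300040292300,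
  0x200000988422a300040292300, 0x20001000a0a0a000040010015, 0x20001010a422a300040292300,
  0x200010188422a300040292300, 0x2040000084828200044082000, 0x40000000048300000c4082000,
  0x40000000640300610c0082000, 0x4000000074010041080082010, 0x40000010642100418804a2300,
  0x4000008034030000c00630341, 0x4000009024230000cc06b2300, 0x40000200200700710c0002000,
  0x4000028024230000cc06b2300, 0x4000041040230061cc0032100, 0x4000041104230000cc06b2300,
  0x4000060000270000ec003a100, 0x4000060104230000cc06b2300, 0x4000080020a10000440010055,
  0x4000081104230000cc06b2300, 0x4000088010830000c10030945, 0x4000089010a10000894022955,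
  0x40000a0000a30000cd4032900, 0x40000a0024a100008944e2b00, 0x40000a0104230000cc06b2300,
  0x4000880304806000c10640000, 0x4001001144004240880480000, 0x400180028023e300000680200,
  0x800000988422a300040292300, 0x800010148422a300040292300, 0x800010188422a300040292300,
  0x800040148422a300040292300, 0x8000600006030000c02630700, 0x8000601004230000cc06b2300,
  0x800800008421a000440210000, 0x8008001034004200880480050, 0x800800110402c200880480000,
  0x80081000a021a000440010051, 0x80200000808382000c4002000, 0x80200000840382000c0082000,
  0x80200000900382000c0002010, 0x80280090a023e300cc0032100, 0x802800988023e300cc0032100,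
  0x802810118023e300cc0032100, 0x802810128023e300cc0032100, 0x802810148023e300cc0032100,
  0x802810188023e300cc0032100, 0x802840118023e300cc0032100, 0x802840148023e300cc0032100,
  0x10000001040260031000380200, 0x10000008054060031000300221, 0x200000090a422a300040292300,
  0x2000000988422a300040292300, 0x2000000d01422a300000280211, 0x2000001900432a700000280200,
  0x80000001684a003000040c2b00, 0x80000201204b0000000c0c6b00, 0x14000008010032a70000c000800,
  0x400000008814030000c00630341, 0x400000028804230000cc06b2300, 0x400000060404230000cc06b2300,
  0x400000060804230000cc06b2300, 0x4000000a0404230000cc06b2300, 0x4000000a0804230000cc06b2300,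
  0x400000100406030000c02630700, 0x400000120404230000cc06b2300, 0x400000120804230000cc06b2300,
  0x400000400406030000c02630700, 0x400000420404230000cc06b2300, 0x4004000000808382000c4002000,
  0x400400100200a0e000c10000000, 0x400400100a04806000c10640000, 0x40060006028023e300cc0032100,
  0x4006000a028023e300cc0032100, 0x40060012028023e300cc0032100, 0x80000002888422a300040292300,
  0x8000000a088422a300040292300, 0x80000012088422a300040292300, 0x800100000084828200044082000,
  0x100000002888422a300040292300, 0x100000003800432a700000280200, 0x100000006088422a300040292300,
  0x100000007000432a700000280200, 0x200000008118422a300040292300, 0x20000000a018422a300040292300,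
  0x2040000080280a2a3000002c0200, 0x400000010118422a300040292300, 0x4000000301004a200000442d2b00,
  0x4080000000084828200044082000, 0x800000004118422a300040292300, 0x800000004300432a700000280200,
  0x800000006018422a300040292300, 0x8000000062004320000040296300, 0x10000000000184128600040086000,
  0x10000000601004320000040296300, 0x10000000601006220000cc2e80000, 0x6000000008040032a70000c000800,
  0x80000000200200922500000240200, 0x1000000000a048422a300040292300, 0x10000000012048422a300040292300,
  0x140000000000084828200044082000, 0x20000000006048422a300040292300, 0x200000000260004320000040296300,
  0x20000000042048422a300040292300, 0x200000000620004320000040296300, 0x40000000000d01422a300000280211,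
  0x40000000200c01422a300000280211, 0x40000000400400424a000000200031, 0x40000000600400426b300000380200,
  0x40000000600420026b300000380200, 0x80000000000d01422a300000280211, 0x800000010004004a0a000000200015,
  0x80000004000c01422a300000280211, 0x100000000000d01422a300000280211, 0x100000000080c01422a300000280211,
  0x100000000100404420a020000200011, 0x100000000180400426b300000380200, 0x100000000180420023e300000680200,
  0x200000000000d01422a300000280211, 0x200000000800504422a321000280200, 0x2000000020004010038261000000010,
  0x200000002800400423e300000680200, 0x200000002800420023e300000680200, 0x400000002001800622a300000a80600,
  0x400000002801000423e300000680200, 0x400000002801020023e300000680200, 0x400000082001020222a300000a80600,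
  0x800000004001801422a300000280211, 0x8000000840010200a2a3000002c0200, 0x1000000000800304422a321000280200,
  0x1000000002800200423e300000680200, 0x1000000002800220023e300000680200, 0x2000000000100304422a321000280200,
  0x2000000000180200423e300000680200, 0x2000000000180220023e300000680200, 0x4000000002820020023e300000680200,
  0x40010000028401006000000cc2e80000, 0x4008000002020020222a300000a80600, 0x8000000010001801422a300000280211,
  0x8000000018001020032a700000280200, 0x80000000900010200a2a3000002c0200, 0x10000000040001801422a300000280211,
  0x10000000060001000423e300000680200, 0x10000000060001020023e300000680200, 0x100000000c00000200906400000640000,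
  0x100000400400008804106400d00600000, 0x20000010000000304422a321000280200, 0x200000140000002200a2a3000002c0200,
  0x40000020000000304422a321000280200, 0x400000280000002200a2a3000002c0200, 0x800060000000200200a2a3000002c0200,
  0x8000c000000020020032a700000280200, 0x100000000040060000622a300000a80600, 0x100000000060020000432a700000280200,
  0x100000000060020020023e300000680200, 0x100008000040020020222a300000a80600, 0x2000010000000000480820400008244200]

def dV5 : List ℕ := [
  11, 45, 44, 48, 44, 48, 4, 45, 36, 14, 45, 16, 0, 10, 0, 4, 10, 14, 8, 44, 41, 48, 21, 14, 14, 0, 18, 41, 15, 45,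
  10, 10, 18, 10, 18, 51, 26, 10, 14, 14, 20, 6, 4, 0, 5, 15, 22, 19, 48, 50, 48, 20, 11, 42, 34, 48, 21, 34, 48, 11,
  48, 21, 34, 28, 48, 46, 51, 0, 4, 44, 19, 22, 2, 46, 49, 34, 46, 34, 34, 34, 34, 28, 34, 34, 27, 34, 25, 6, 31, 31,
  50, 28, 28, 27, 18, 5, 39, 4, 30, 30, 2, 30, 30, 26, 30, 41, 4, 22, 6, 30, 40, 30, 41, 21, 33, 21, 30, 30, 2, 26,
  30, 18, 30, 28, 42, 22, 51, 30, 30, 51, 10, 19, 49, 4, 51, 34, 26, 19, 4, 51, 51, 51, 51, 51, 51, 51, 51, 19, 5, 30,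
  30, 4, 46, 18, 27, 27, 0, 19, 19, 19, 19, 19, 25, 19, 19, 10, 19, 31, 51, 18, 51, 51, 51, 51, 30, 51, 26, 30, 46, 30,
  46, 51, 30, 18, 30, 21, 51, 30, 46, 51, 14, 19, 14, 23, 46, 18, 51, 30, 19, 51, 14, 30, 14, 4, 4, 21, 20, 20, 4, 21,
  4, 4, 4, 41, 20, 22, 4, 41, 42, 22, 22, 23, 22, 22, 23, 4, 18, 41, 22, 22, 41, 22, 22, 22, 23, 23, 4, 46, 18, 4,
  22, 22, 46, 32, 41, 18, 41, 18, 18, 46, 23, 46, 22, 23, 46]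

def dP4 : List ℕ := [
  0x3424000000018a030, 0x54840018000140024, 0x74000001000000301,
  0x74000010000108020, 0xb4001000000108020, 0xb4004000800400040,
  0xe4000101000000300, 0x254800009000040205, 0x254800018000140024,
  0x486000100000000700, 0x894000100000000301, 0x1054200001000080211,
  0x1064200001000082300, 0x1084211200280180000, 0x10a4200300000082300,
  0x1184200300000082300, 0x1280a00300004002900, 0x1484200300000082300,
  0x1884200300000082300, 0x3004300700000080200, 0x3044200301000080200,
  0x4014241200000180030, 0x4054000101000000201, 0x5044200301000080200,
  0x8034020000000210301, 0x8054020021000200201, 0x80a4022100000210300,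
  0x80b0022100000010101, 0x8814020000c00600040, 0x8884022100000210300,
  0x90a022a300040012100, 0xc014022100000200201, 0x18004122500000200200,
  0x18006022100000200600, 0x18014022100000200201, 0x20014240000000180231,
  0x20184200300000082300, 0x20280a0a000044010800, 0x20484200300000082300,
  0x20884200300000082300, 0x40024040000000210021, 0x40054040011000100221,
  0x40184022100000210300, 0x40484022100000210300, 0x40884022100000210300,
  0x48010060031000000021, 0x6000026000004001a100, 0x6000032a700000000000,
  0x6028022a300040012100, 0x80000860000e10000000, 0x80044840019000140200,
  0x80184022100000210300, 0x80280822100000010900, 0x80280845000a10000000,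
  0x80484022100000210300, 0x80884022100000210300, 0x88010840019000000025,
  0xa0000a20000044012900, 0x1000a4022100000210300, 0x100184022100000210300,
  0x100280822100000010900, 0x100406020000000210700, 0x100484022100000210300,
  0x100884022100000210300, 0x101000a20000044012900, 0x12028022a300040012100,
  0x201004300000000086300, 0x400406020000c02600000, 0x400484022100000210300,
  0x40100032a700000000000, 0x40118022a300040012100, 0x600004122500000200200,
  0x600006020000c02600000, 0x600006022100000200600, 0x800000850059000000000,
  0x800034010000800420341, 0x800044810049000440200, 0x800054800009000040205,
  0x800084010200080082000, 0x8000a4014100800420300, 0x801040810049000000045,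
  0x801180214300880022100, 0x820000250000a8002a100, 0x820024050000a00528300,
  0x8201042100008804a2300, 0x820280214300880022100, 0x880030050000a00028161,
  0x88010030070000c000800, 0x880280055100a00028100, 0x1000084036100000600200,
  0x10000a4014100800420300, 0x1000184014100800420300, 0x1040000070000e00038100,
  0x10400a0036100c00030100, 0x1040280036100c00030100, 0x1080000070000e00038100,
  0x10800a0036100c00030100, 0x1080100122500008000800, 0x1080280036100c00030100,
  0x180000023e300000000000, 0x180000026b300000000000, 0x2000044840019000140200,
  0x2001040840019000000025, 0x600000026b300000000000, 0x8000084018000440200000,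
  0x80080a0036100c00030100, 0x8008880036100c00030100, 0x8100180036100c00030100,
  0x8100280036100c00030100, 0x8100480036100c00030100, 0x8100880036100c00030100,
  0x8400180036100c00030100, 0x8400480036100c00030100, 0x20000034010000800420341,
  0x20000084010200080082000, 0x20001030210000880022151, 0x200010a0214300880022100,
  0x20001180214300880022100, 0x20001280214300880022100, 0x20001480214300880022100,
  0x20001880214300880022100, 0x2800000023e300000000000, 0x4000820022a300000000011,
  0x10008080022a300004000800, 0x18000000032a00000c000800, 0x200000084036100000600200,
  0x200000484014100800420300, 0x200000884014100800420300, 0x200008000130000d00034100,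
  0x200008280114500900024100, 0x200010004036100000600200, 0x200040280036100c00030100,
  0x200080280036100c00030100, 0x200100280036100c00030100, 0x200110080012400500014000,
  0x400000084214300000480200, 0x400000484014100800420300, 0x400000884014100800420300,
  0x400020280214300880022100, 0x400080000a2a300004000800, 0x40008040022a300004000800,
  0x40008080022a300004000800, 0x60000000023e300000000000, 0x60000000032a700000000000,
  0x800010200122500000200200, 0x800010202022100000200600, 0x1000000000a400000001c0200,
  0x1000000014a000000000c0215, 0x1000008010840000000140225, 0x200000908422a300000280200,
  0x20001000a020a000040010011, 0x200010108422a300000280200, 0x2040000084028200040082000,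
  0x4000000000230000000680200, 0x4000000000a10000000000055, 0x40000000040300000c0082000,
  0x4000000004810000084082000, 0x4000000064010041080082000, 0x40000010242100008804a2300,
  0x4000001040210041880022100, 0x40000011042100008804a2300, 0x4000008010030000c00030141,
  0x4000008024030000c00630300, 0x4000009010210000880022151, 0x40000200200300610c0002000,
  0x40000200242100008804a2300, 0x40000201042100008804a2300, 0x4000041000230000cc0032100,
  0x4000060000230000cc0032100, 0x4000080000830000c10030900, 0x4000080020810000400010045,
  0x4000080104030000c00630300, 0x4000088010810000810020945, 0x40000a0000a10000894022900,
  0x4000880104006000c00600000, 0x4000880200806000000640000, 0x4001001104004200880480000,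
  0x400180028022a300000280200, 0x8000000004210000440210000, 0x8000000034004000800400040,
  0x8000009000230000cc0032100, 0x8000009804220000040292300, 0x80001000a020a000040010011,
  0x8000101000230000cc0032100, 0x800010108422a300000280200, 0x8000401000230000cc0032100,
  0x8000401404220000040292300, 0x8000600004030000c00630300, 0x800800008021a000000000051,
  0x8008001024004200880480000, 0x8008001104004200880480000, 0x80200000800382000c0002000,
  0x10000000044060031000300200, 0x10000001040060031000300200, 0x2000000908422a300000280200,
  0x2000000d00422a300000280200, 0x2000001900422a300000280200, 0x4000008010022a300004000800,
  0x80000000084800200004082000, 0x80000201204a000000040c2b00, 0x14000000000032a700000000000,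
  0x400000000004210000440210000, 0x400000008804030000c00630300, 0x400000028000230000cc0032100,
  0x400000040404030000c00630300, 0x400000040804030000c00630300, 0x400000060000230000cc0032100,
  0x400000080404030000c00630300, 0x400000080804030000c00630300, 0x4000000a0000230000cc0032100,
  0x400000100404030000c00630300, 0x400000100804030000c00630300, 0x400000120000230000cc0032100,
  0x400000400404030000c00630300, 0x400000420000230000cc0032100, 0x400400000080828200044002000,
  0x400400008804006000c00600000, 0x400400100200806000c10000000, 0x400400100804006000c00600000,
  0x800000028804220000040292300, 0x8000000a008422a300000280200, 0x800000120804220000040292300,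
  0x800100000084028200040082000, 0x100000002808422a300000280200, 0x100000003800422a300000280200,
  0x100000006008422a300000280200, 0x100000007000422a300000280200, 0x2000000081104220000040292300,
  0x20000000a008422a300000280200, 0x204000008028022a300000280200, 0x4000000000004820000044082000,
  0x400000010108422a300000280200, 0x4000000301004a000000040c2b00, 0x800000004108422a300000280200,
  0x800000004300422a300000280200, 0x8000000060104220000040292300, 0x8000000062004220000040292300,
  0x10000000000180128600040006000, 0x10000000601004220000040292300, 0x10000000601004220000cc0680000,
  0x4000000008040022a300004000800, 0x6000000000000032a00000c000800, 0x80000000200200122500000200200,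
  0x80000000200202022100000200600, 0x1000000000a0404220000040292300, 0x10000000012008422a300000280200,
  0x140000000000080828200044002000, 0x200000000060404220000040292300, 0x200000000260004220000040292300,
  0x20000000042008422a300000280200, 0x200000000620004220000040292300, 0x40000000000d00422a300000280200,
  0x40000000200c00422a300000280200, 0x40000000400400024a000000000031, 0x40000000600400422a300000280200,
  0x40000000600420022a300000280200, 0x80000000000d00422a300000280200, 0x800000010004000a0a000000000015,
  0x80000004000c00422a300000280200, 0x100000000000d00422a300000280200, 0x100000000080c00422a300000280200,
  0x100000000100400420a000000200011, 0x100000000180400422a300000280200, 0x100000000180420022a300000280200,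
  0x200000000000d00422a300000280200, 0x200000000800500422a300000280200, 0x2000000020004010028221000000010,
  0x200000002800400422a300000280200, 0x200000002800420022a300000280200, 0x400000002001800422a300000280200,
  0x400000002801000422a300000280200, 0x400000002801020022a300000280200, 0x400000082001020022a300000280200,
  0x800000004001800422a300000280200, 0x800000084001020022a300000280200, 0x1000000000800300422a300000280200,
  0x1000000002800200422a300000280200, 0x1000000002800220022a300000280200, 0x2000000000100300422a300000280200,
  0x2000000000180200422a300000280200, 0x2000000000180220022a300000280200, 0x40000000020400006000000c02600000,
  0x4000000002820020022a300000280200, 0x40010000028401004000000cc0680000, 0x4008000002020020022a300000280200,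
  0x8000000010001800422a300000280200, 0x8000000018001020022a300000280200, 0x8000000090001020022a300000280200,
  0x100000000400008004106400000600000, 0x10000000040001800422a300000280200, 0x10000000060001000422a300000280200,
  0x10000000060001020022a300000280200, 0x100000000c00000200806000000640000, 0x20000010000000300422a300000280200,
  0x20000014000000220022a300000280200, 0x40000020000000300422a300000280200, 0x40000028000000220022a300000280200,
  0x80006000000020020022a300000280200, 0x8000c000000020020022a300000280200, 0x100000000040060000422a300000280200,
  0x100000000060020000422a300000280200, 0x100000000060020020022a300000280200, 0x100008000040020020022a300000280200,
  0x2000010000000000400820000008244200]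

def dV4 : List ℕ := [
  13, 2, 36, 15, 48, 6, 36, 2, 18, 10, 0, 4, 8, 20, 19, 44, 11, 19, 13, 46, 36, 48, 44, 36, 21, 41, 16, 0, 6, 49,
  30, 0, 46, 10, 0, 0, 8, 11, 13, 13, 5, 36, 16, 16, 16, 41, 15, 46, 51, 28, 9, 49, 11, 28, 16, 16, 2, 26, 16, 21,
  11, 10, 16, 8, 30, 51, 14, 25, 49, 46, 51, 46, 25, 10, 40, 6, 9, 2, 19, 50, 0, 50, 13, 20, 19, 45, 5, 44, 48, 9,
  9, 22, 33, 49, 49, 15, 49, 27, 34, 50, 48, 36, 39, 48, 51, 50, 49, 50, 50, 49, 49, 50, 49, 22, 13, 4, 50, 50, 50, 50,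
  44, 50, 4, 11, 27, 9, 17, 22, 34, 46, 22, 34, 34, 34, 34, 9, 9, 22, 31, 26, 26, 11, 51, 46, 46, 10, 20, 0, 2, 19,
  4, 19, 19, 19, 4, 30, 26, 42, 19, 42, 22, 6, 21, 4, 41, 19, 19, 30, 34, 34, 34, 34, 2, 26, 21, 18, 19, 19, 30, 6,
  34, 19, 4, 34, 51, 34, 19, 9, 6, 31, 31, 51, 36, 41, 19, 19, 19, 26, 45, 18, 46, 21, 21, 30, 21, 21, 31, 21, 21, 30,
  21, 21, 30, 21, 30, 26, 21, 28, 34, 30, 51, 21, 19, 51, 51, 51, 51, 30, 51, 21, 30, 19, 18, 51, 51, 19, 19, 46, 21, 19,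
  45, 27, 46, 10, 30, 51, 26, 21, 21, 21, 21, 19, 19, 5, 19, 21, 19, 2, 19, 19, 19, 21, 19, 19, 51, 51, 4, 19, 51, 19,
  19, 19, 19, 19, 19, 51, 51, 19, 21, 21, 19, 25, 21, 19, 51, 51, 51, 51, 46, 19, 19, 19, 18, 51, 19, 51, 51, 19, 19, 19,
  19, 21, 51, 21]

def dP3 : List ℕ := [
  0x14240000000180030, 0x14a000000000c0014, 0x34000000000000301,
  0x34000000000108020, 0x44060030000300000, 0x44810048000440000,
  0x44840018000140000, 0x54000001000000201, 0x54000010000100020,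
  0x64000001000082000, 0x84010200080080000, 0x84036000000600000,
  0x84214200000480000, 0xa4000100000000300, 0xa4004000800400000,
  0x184000100000000300, 0x184000200000082000, 0x244800009000040200,
  0x250800018000000024, 0x280800200004002000, 0x280808000044000000,
  0x484000100000000300, 0x484004000800400000, 0x884000100000000300,
  0x884002000000210000, 0x1040200001000002100, 0x1040200001000080200,
  0x1040810048000000044, 0x1080211200280000000, 0x1084200300000080200,
  0x10a0200300000002100, 0x1104200000000082300, 0x1180200300000002100,
  0x1200a00000004002900, 0x1280200300000002100, 0x1480200300000002100,
  0x1880204200880000000, 0x3004200300000080200, 0x4014000200000080010,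
  0x5004200300000080200, 0x8000120000000014100, 0x8010020000000010101,
  0x8010020000000200201, 0x8084022100000200200, 0x80a0022100000010100,
  0x8200022100000000001, 0x8804020000000210300, 0x8804020000c00600000,
  0x9000220000040012100, 0x900022a300000000000, 0xc004022100000200200,
  0x18004022100000200200, 0x20000240000000180200, 0x20000240000a80000000,
  0x20084200300000080200, 0x20280200300000002100, 0x2028020a000040010000,
  0x20404200000000082300, 0x20804200000000082300, 0x30004200300000080200,
  0x40000060000000018100, 0x40014040000000100221, 0x40024000000000210001,
  0x40084022100000200200, 0x40104020000000210300, 0x40280022100000010100,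
  0x42004020000000210300, 0x42004022100000200200, 0x48010040011000000021,
  0x50004022100000200200, 0x60000220000040012100, 0x6000022a300000000000,
  0x80000060000e00000000, 0x80000820000000010900, 0x80000822100000000800,
  0x80000840019000000000, 0x80020800000000010005, 0x80084022100000200200,
  0x80100022100000000800, 0x8010030060000c000000, 0x80104020000000210300,
  0x80280022100000010100, 0x80280045000a00000000, 0x80400022100000000800,
  0x80404020000000210300, 0x80800028200004000000, 0x88010040011000000021,
  0xa0000220000040012100, 0x100000820000000010900, 0x100084022100000200200,
  0x1000a0002000000010001, 0x100180022100000010100, 0x100280022100000010100,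
  0x100404020000000210300, 0x101000220000040012100, 0x10100022a300000000000,
  0x101000a00000004002900, 0x120000220000040012100, 0x201004200000000082300,
  0x220004200000000082300, 0x400180022100000010100, 0x400404020000000210300,
  0x400404020000c00600000, 0x401000220000040012100, 0x401000220000cc0000000,
  0x40100022a300000000000, 0x420000220000040012100, 0x42000022a300000000000,
  0x600004020000c00600000, 0x600004022100000200200, 0x80000030000000c000800,
  0x800000810049000000000, 0x800024010000800420300, 0x800030010000800020141,
  0x800044800009000040200, 0x800080010200080002000, 0x800104010000800420300,
  0x800280014100800020100, 0x801000210000880022100, 0x802004200300000080200,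
  0x80800022a300000000000, 0x820000050000a00028100, 0x820000210000880022100,
  0x880000050000a00028100, 0x1000000036100000000000, 0x1000000122500000000000,
  0x10000a0014100800020100, 0x1000180014100800020100, 0x1000280014100800020100,
  0x1000280022100000200200, 0x100100022a300000000000, 0x1002200022100000200200,
  0x1004004022100000200200, 0x1004200022100000200200, 0x1040000030000c00030100,
  0x1080000030000c00030100, 0x180000022a300000000000, 0x2000000840000000000025,
  0x2000000840000000140200, 0x2001040040011000000021, 0x2004200200300000080200,
  0x200800022a300000000000, 0x4004004022100000200200, 0x600000022a300000000000,
  0x8000004010000440200000, 0x8000080012000400010000, 0x8000480014100800020100,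
  0x8000880014100800020100, 0x8002004022100000200200, 0x8002200022100000200200,
  0x8004004022100000200200, 0x8004200022100000200200, 0x8008000030000c00030100,
  0x8010004022100000200200, 0x8010200022100000200200, 0x8100000030000c00030100,
  0x8400000030000c00030100, 0x20000030010000800020141, 0x20000080010200080002000,
  0x20001000210000880022100, 0x20002004200300000080200, 0x20004200200300000080200,
  0x2000800022a300000000000, 0x20200200200300000080200, 0x2800000022a300000000000,
  0x28401000000000cc0000000, 0x4000800022a300000000000, 0x80010200022100000200200,
  0x100010004200300000080200, 0x100010200200300000080200, 0x10008000022a300000000000,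
  0x18000000022a000004000800, 0x200000000036100000000000, 0x200000080010400100004000,
  0x200000084014100000400200, 0x200000280014100800020100, 0x200000880014100800020100,
  0x200008000110000900024100, 0x200010004022100000200200, 0x200010200022100000200200,
  0x200110080002400000014000, 0x200200004022100000200200, 0x400000000214300000000000,
  0x400000280014100800020100, 0x400000480014100800020100, 0x400000880014100800020100,
  0x40000800022a300000000000, 0x40008000022a300000000000, 0x400200200200300000080200,
  0x40040000022a300000000000, 0x60000000022a300000000000, 0x800010200022100000200200,
  0x82000000022a300000000000, 0x84000000022a300000000000, 0x1000000000840000000140200,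
  0x1000000000a000000000c0200, 0x1000008010040000000100221, 0x200000000420a000000200000,
  0x20000000a020a000040010000, 0x2040000080028200040002000, 0x4000000000030000000600200,
  0x40000000000300000c0002000, 0x4000000000810000000000045, 0x4000000004010000080082000,
  0x4000000024010000800420300, 0x4000000104004000800400000, 0x4000000104010000800420300,
  0x400000020020a000000200000, 0x4000001000210000880022100, 0x4000008000030000c00030100,
  0x4000008010010000800020141, 0x4000020000210000880022100, 0x4000020020010041080002000,
  0x4000040000030000c00030100, 0x4000080000810000810020900, 0x4000880100006000c00000000,
  0x4000880200006000000600000, 0x4001001100004200880000000, 0x80000000000300000c0002000,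
  0x8000000000220000000280200, 0x8000000004010000400210000, 0x8000000004200000040210000,
  0x8000000024004000800400000, 0x80000000a020a000040010000, 0x8000000104004000800400000,
  0x8000001000210000880022100, 0x8000400000030000c00030100, 0x800800008020a000000000011,
  0x8008001004004200000480000, 0x10000000000060000000300200, 0x10000001040040011000100200,
  0x2000000000420a000000200000, 0x40000000280200300000080200, 0x4000008000022a300000000000,
  0x80000000004800000004082000, 0x80000002200200300000080200, 0x100000002004022100000200200,
  0x100000002200022100000200200, 0x14000000000022a300000000000, 0x200000002004022100000200200,
  0x200000002200022100000200200, 0x400000000000210000440010000, 0x400000000404010000800420300,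
  0x400000000804004000800400000, 0x400000000804010000800420300, 0x400000008000030000c00030100,
  0x400000020000210000880022100, 0x400000040000030000c00030100, 0x400000080000030000c00030100,
  0x400000100000030000c00030100, 0x400000400000030000c00030100, 0x400400000080028200040002000,
  0x400400008800006000c00000000, 0x400400100004006000000600000, 0x400400100200006000c00000000,
  0x800000000000220000000280200, 0x800000000004020000040082000, 0x800100000080028200040002000,
  0x1000000000000220000000280200, 0x2000000000000220000000280200, 0x2000000000200028200000080000,
  0x400000000000420a000000200000, 0x4000000000004800000004082000, 0x8000000000000220000000280200,
  0x8000000000004200000040210000, 0x10000000000000120000040006000, 0x10000000000004020000040082000,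
  0x10000000000004200000440200000, 0x10000000000180028200040002000, 0x10000008000004000000440200000,
  0x20000000200200022100000200200, 0x4000000000040022a000004000800, 0x6000000000000022a000004000800,
  0x6000000000000022a300000000000, 0x80000000200200022100000200200, 0xc000000000000022a300000000000,
  0x100000000000000220000000280200, 0x140000000000080028200040002000, 0x200000000000004020000040082000,
  0x200000000000004028200000080000, 0x40000000000000420a000000200000, 0x400000000000200028200000080000,
  0x40000000400400020a000000000011, 0x80000000000000420a000000200000, 0x80000001000400020a000000000011,
  0x100000000000000420a000000200000, 0x100000000000020020a000000200000, 0x100000000100400020a000000000011,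
  0x2000000000000000220000000280200, 0x200000000000000420a000000200000, 0x2000000020004000028221000000000,
  0x400000000000000420a000000200000, 0x400000000000020020a000000200000, 0x800000000000000420a000000200000,
  0x800000000000020020a000000200000, 0x10000000000000000220000000280200, 0x1000000000000020020a000000200000,
  0x20000000000000004028200000080000, 0x2000000000000020020a000000200000, 0x40000000000000000220000000280200,
  0x40000000000000200028200000080000, 0x40000000020400004000000c00600000, 0x80000000000000000220000000280200,
  0x10000000000000000420a000000200000, 0x10000000000000020020a000000200000, 0x100000000400008004006000000600000,
  0x100000000c00000200006000000600000, 0x200000000000000000220000000280200, 0x20000000000000020020a000000200000,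
  0x400000000000000000220000000280200, 0x80000000000000020020a000000200000, 0x1000000000000000000220000000280200,
  0x100000000000000000420a000000200000, 0x1000000000000000200028200000080000, 0x2000010000000000400800000008044200]

def dV3 : List ℕ := [
  5, 2, 8, 20, 21, 22, 40, 36, 20, 36, 19, 50, 19, 44, 50, 9, 19, 36, 39, 45, 26, 44, 50, 9, 16, 36, 36, 6, 48, 44,
  13, 13, 13, 11, 13, 13, 45, 45, 45, 45, 14, 0, 21, 9, 8, 0, 21, 21, 30, 51, 21, 9, 9, 31, 44, 13, 16, 13, 13, 9,
  15, 20, 21, 9, 21, 16, 21, 49, 36, 44, 30, 51, 33, 16, 11, 39, 0, 9, 11, 46, 21, 49, 48, 11, 21, 51, 0, 30, 11, 9,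
  0, 16, 16, 21, 30, 51, 26, 30, 19, 13, 16, 21, 21, 30, 30, 51, 30, 51, 22, 21, 11, 42, 17, 17, 9, 13, 17, 17, 17, 19,
  51, 17, 17, 17, 49, 46, 17, 17, 17, 21, 51, 9, 21, 9, 17, 17, 51, 2, 9, 36, 9, 51, 21, 51, 34, 49, 17, 17, 21, 9,
  21, 9, 17, 9, 21, 17, 17, 17, 45, 17, 19, 9, 51, 19, 51, 30, 45, 49, 9, 19, 51, 51, 50, 46, 9, 17, 17, 17, 9, 21,
  46, 21, 44, 17, 17, 17, 51, 51, 19, 51, 51, 21, 51, 45, 18, 9, 5, 21, 30, 30, 9, 30, 2, 19, 17, 22, 17, 49, 17, 17,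
  17, 17, 42, 17, 17, 34, 21, 31, 30, 9, 21, 16, 35, 30, 50, 17, 17, 4, 19, 21, 40, 49, 19, 51, 13, 19, 21, 21, 51, 49,
  44, 30, 17, 50, 17, 17, 17, 17, 17, 17, 17, 13, 34, 22, 35, 9, 13, 45, 9, 9, 45, 49, 13, 9, 16, 14, 13, 34, 51, 34,
  21, 26, 11, 45, 21, 45, 9, 13, 13, 45, 49, 45, 51, 49, 49, 49, 49, 0, 9, 49, 51, 49, 49, 49, 49, 9, 49, 45, 49, 9,
  45, 21, 9, 49, 49, 22, 50, 9, 49, 9, 49, 9, 49, 45, 18]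

def dP2 : List ℕ := [
  0x30000000600000, 0x60030000000000, 0x214200000000000,
  0x220000000280000, 0x240000000180000, 0x30000000c000000,
  0x810048000000000, 0x840000000140000, 0xa000000000c0000,
  0x4020000040080000, 0x4028000000080000, 0x4200000040200000,
  0x4208000000200000, 0x4800000004080000, 0x14000000000000201,
  0x14000000000080010, 0x20800000000010004, 0x24000000000000300,
  0x24000000000082000, 0x24000000800400000, 0x30000000000000101,
  0x30000000000008020, 0x30000000800000040, 0x44000008000040000,
  0x44000010000100000, 0x50000010000000020, 0x80010200080000000,
  0x84000200000080000, 0x84002000000200000, 0x84004000000400000,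
  0xa0000100000000100, 0xa0002000000010000, 0xa0004000800000000,
  0x104000000000000300, 0x104000000800400000, 0x180000100000000100,
  0x180000200000002000, 0x180004000800000000, 0x200028000000080000,
  0x200208000000200000, 0x200800000000000024, 0x200800000000040200,
  0x200800000004002000, 0x280000100000000100, 0x280000100000000200,
  0x280004000800000000, 0x280008000040000000, 0x400022000000000800,
  0x404000000000000300, 0x404000000800400000, 0x480000100000000100,
  0x480004000800000000, 0x804000000000000300, 0x804000000800400000,
  0x880000100000000100, 0x880004000800000000, 0x1000200000000002100,
  0x1000200000000080200, 0x1000200000280000000, 0x1000200000880000000,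
  0x1000200300000000000, 0x1040000001000000200, 0x1040000008000000004,
  0x1040000010000000020, 0x2004000000000000300, 0x2004000100000000200,
  0x2200000100000000200, 0x2200002000000200000, 0x4004000100000000200,
  0x4200000200000080000, 0x4200002000000200000, 0x8000020000000010100,
  0x8000020000c00000000, 0x8000022100000000000, 0x8000100000000004100,
  0x8000100000900000000, 0x8010000000000000101, 0x8010000000000000201,
  0x8010000000800000040, 0x8010000010000000020, 0x10004000200000080000,
  0x10004002000000200000, 0x10200000100000000200, 0x20000040000000008100,
  0x20000040000a00000000, 0x20000200000000002100, 0x20000200000000080200,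
  0x20000200000880000000, 0x20000200300000000000, 0x2000020a000000000000,
  0x20020000001000002000, 0x40000020000000010100, 0x40000020000000200200,
  0x40000020000c00000000, 0x40000022100000000000, 0x40000040000000000021,
  0x40020000000000010001, 0x80000020000000010100, 0x80000020000c00000000,
  0x80000022100000000000, 0x80000040000000008100, 0x80000040000a00000000,
  0x80000040011000000000, 0x80000800000000000900, 0x80000800000810000000,
  0x80100000200004000000, 0x80800000200004000000, 0x100000020000000010100,
  0x100000020000c00000000, 0x100000022100000000000, 0x100000800000000000900,
  0x110000000000000014000, 0x200004000000000000300, 0x200004000000400200000,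
  0x200004000100000000200, 0x200200000100000000200, 0x400000020000000010100,
  0x400000020000c00000000, 0x400000022100000000000, 0x800000010000000000041,
  0x800000010000000400200, 0x800000010000080002000, 0x800000010000200008000,
  0x800000014100000000000, 0x800000200300000000000, 0x800000800009000000000,
  0x880000006000000000000, 0x1000000010000400010000, 0x1000000014100000000000,
  0x1000000022100000000000, 0x1001000004200000000000, 0x1004000008000000000010,
  0x2000000040000000000021, 0x2000000200300000000000, 0x4000000022100000000000,
  0x4004000002000000000001, 0x8000000010000400010000, 0x8000000014100000000000,
  0x8000000022100000000000, 0x8000004000000040200000, 0x8000080002000000000001,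
  0x8001000000000880000000, 0x8001000004200000000000, 0x10004000008000000000010,
  0x20000000010000000000041, 0x20000000010000080002000, 0x20000000200300000000000,
  0x20004000000201000000000, 0x20400000000000c00000000, 0x4000000020a000000000000,
  0x40000080000200000002000, 0x80000000020000000200200, 0x80000000022000000000800,
  0x100000000200000004000800, 0x100000000200300000000000, 0x100000080008000040000000,
  0x200000000010000100004000, 0x200000000014100000000000, 0x200000000022100000000000,
  0x200000080002000000010000, 0x400000000014100000000000, 0x400000000200300000000000,
  0x400000080008000040000000, 0x400008000006000000000000, 0x400100000006000000000000,
  0x800000000022100000000000, 0xc00000000000000000600000, 0x1000000000040000000100200,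
  0x2000000000028200000000000, 0x200000000020a000000000000, 0x4000000000010000000000041,
  0x4000000000010000000400200, 0x4000000000010000010000800, 0x4000000000010000080002000,
  0x4000000000010000400010000, 0x4000000100004000800000000, 0x4000000200004000000400000,
  0x8000000000010000080002000, 0x8000000000010000400010000, 0x800000000020a000000000000,
  0x8000000004004000000400000, 0x10000000000040000000100200, 0x40000000000200300000000000,
  0x80000000000200300000000000, 0x100000000000022100000000000, 0x200000000000020000000200200,
  0x400000000000010000000400200, 0x400000000000010000080002000, 0x400000000000010000400010000,
  0x400000000000028200000000000, 0x400000000004002000000200000, 0x400000000200002000400000000,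
  0x400000000800004000800000000, 0x800000000000020000040002000, 0x10000000000000020000040002000,
  0x10000000000400000000000004200, 0x20000000000000022100000000000, 0x20000000000000028000004000000,
  0x4000000000000020a000000000000, 0x40000000000080008000040000000, 0x80000000000000022100000000000,
  0x100000000000000028200000000000, 0x400000000000000200000000000011, 0x800000000000000200000000000011,
  0x100000000000000020a000000000000, 0x2000000000000000020021000000000, 0x40000000000000004000000800400000,
  0x100000000000000004002000000200000, 0x100000000000000200002000000200000, 0x2000000000000000000800000008004000]

def dV2 : List ℕ := [
  21, 40, 50, 19, 19, 27, 42, 18, 18, 19, 19, 30, 51, 26, 9, 4, 2, 8, 13, 35, 8, 15, 35, 18, 20, 5, 31, 45, 49, 50,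
  8, 16, 35, 8, 35, 8, 13, 35, 19, 21, 2, 18, 13, 8, 44, 35, 30, 11, 8, 35, 8, 35, 8, 35, 8, 50, 8, 9, 33, 35,
  44, 36, 2, 5, 8, 44, 44, 49, 44, 19, 49, 16, 35, 44, 14, 32, 8, 9, 6, 40, 45, 49, 44, 8, 35, 8, 9, 35, 44, 49,
  36, 8, 9, 35, 44, 0, 0, 8, 35, 44, 8, 35, 36, 8, 28, 26, 26, 8, 35, 44, 8, 16, 8, 34, 44, 44, 8, 35, 44, 0,
  9, 13, 15, 44, 44, 36, 49, 16, 44, 44, 45, 4, 0, 44, 44, 49, 16, 44, 44, 30, 0, 35, 45, 4, 0, 13, 44, 36, 34, 49,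
  13, 9, 11, 11, 44, 30, 14, 44, 44, 16, 44, 44, 30, 50, 50, 44, 22, 9, 45, 49, 0, 9, 11, 13, 16, 35, 22, 13, 16, 49,
  50, 9, 44, 44, 44, 9, 9, 13, 16, 45, 21, 34, 50, 13, 13, 9, 44, 26, 49, 30, 44, 45, 0, 0, 49, 36, 35, 49, 49, 14]

def dP1 : List ℕ := [
  0x10000000000040, 0x10000000400000, 0x10000010000000,
  0x10000080000000, 0x10000100000000, 0x10000200000000,
  0x10000400000000, 0x14000000000000, 0x20000000010000,
  0x20000000200000, 0x20000040000000, 0x20000400000000,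
  0x20020000000000, 0x22000000000000, 0x28000000000000,
  0x40000000000020, 0x40000000008000, 0x40000000100000,
  0x40000200000000, 0x40010000000000, 0x200000000000010,
  0x200000000002000, 0x200000000080000, 0x200000004000000,
  0x200000080000000, 0x200200000000000, 0x208000000000000,
  0x800000000000800, 0x800000004000000, 0x800000008000000,
  0x800008000000000, 0x4000000000000200, 0x4000000000080000,
  0x4000000000200000, 0x4000000000400000, 0x10000000000000001,
  0x10000000000000020, 0x10000000000000040, 0x20000000000002000,
  0x20000000000010000, 0x40000008000000000, 0x40000010000000000,
  0x80000100000000000, 0x80000200000000000, 0x80002000000000000,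
  0x80004000000000000, 0x80008000000000000, 0x200000000000000020,
  0x200000000000000200, 0x200000000000200000, 0x400000000000004000,
  0x800000000800000000, 0x1000000000000000200, 0x1000004000000000000,
  0x4000000200000000000, 0x4000008000000000000, 0x8000000000000000100,
  0x8000000000800000000, 0x80000000000800000000, 0x80000000200000000000,
  0x80000004000000000000, 0x100000000000000004000, 0x400000000000800000000,
  0x4000000000000000000001, 0x8000000000000080000000, 0x400000000000000000200000,
  0x400000000002000000000000, 0x4000000000004000000000000, 0x400000000000002000000000000]

def dV1 : List ℕ := [
  6, 22, 28, 31, 32, 33, 34, 50, 16, 21, 30, 34, 41, 49, 51, 5, 15, 20, 33, 40, 4, 13, 19, 26, 31, 45, 51, 11, 26, 27,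
  39, 9, 19, 21, 22, 0, 5, 6, 13, 16, 39, 40, 44, 45, 49, 50, 51, 5, 9, 21, 14, 35, 9, 50, 45, 51, 8, 35, 35, 45,
  50, 14, 35, 0, 31, 21, 49, 50, 49]


theorem dG1 : ∀ P ∈ dP1, DGood 1 P :=
  dLvl_sound 0 [0] dP1 dV1 (by decide +kernel) (fun P _ => dGood_zero P)

theorem dG2 : ∀ P ∈ dP2, DGood 2 P :=
  dLvl_sound 1 dP1 dP2 dV2 (by decide +kernel) dG1

theorem dG3 : ∀ P ∈ dP3, DGood 3 P :=
  dLvl_sound 2 dP2 dP3 dV3 (by decide +kernel) dG2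

theorem dG4 : ∀ P ∈ dP4, DGood 4 P :=
  dLvl_sound 3 dP3 dP4 dV4 (by decide +kernel) dG3

theorem dG5 : ∀ P ∈ dP5, DGood 5 P :=
  dLvl_sound 4 dP4 dP5 dV5 (by decide +kernel) dG4

theorem dG6 : ∀ P ∈ dP6, DGood 6 P :=
  dLvl_sound 5 dP5 dP6 dV6 (by decide +kernel) dG5

theorem dG7 : ∀ P ∈ dP7, DGood 7 P :=
  dLvl_sound 6 dP6 dP7 dV7 (by decide +kernel) dG6

theorem dG8 : ∀ P ∈ dP8, DGood 8 P :=
  dLvl_sound 7 dP7 dP8 dV8 (by decide +kernel) dG7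

theorem dG9 : ∀ P ∈ dP9, DGood 9 P :=
  dLvl_sound 8 dP8 dP9 dV9 (by decide +kernel) dG8

theorem dG10 : ∀ P ∈ dP10, DGood 10 P :=
  dLvl_sound 9 dP9 dP10 dV10 (by decide +kernel) dG9

theorem dG11 : ∀ P ∈ dP11, DGood 11 P :=
  dLvl_sound 10 dP10 dP11 dV11 (by decide +kernel) dG10

theorem dG12 : ∀ P ∈ dP12, DGood 12 P :=
  dLvl_sound 11 dP11 dP12 dV12 (by decide +kernel) dG11

theorem dG13 : ∀ P ∈ dP13, DGood 13 P :=
  dLvl_sound 12 dP12 dP13 dV13 (by decide +kernel) dG12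

theorem dG14 : ∀ P ∈ dP14, DGood 14 P :=
  dLvl_sound 13 dP13 dP14 dV14 (by decide +kernel) dG13

theorem dG15 : ∀ P ∈ dP15, DGood 15 P :=
  dLvl_sound 14 dP14 dP15 dV15 (by decide +kernel) dG14

theorem dG16 : ∀ P ∈ dP16, DGood 16 P :=
  dLvl_sound 15 dP15 dP16 dV16 (by decide +kernel) dG15

theorem dRows_nonneg (k : Fin 4 → ℤ) (p : Fin 12 → ℤ) (hp : ∀ j, 0 ≤ p j)
    (h : SatisfiesIneqs k p) : ∀ r ∈ dRows, 0 ≤ dS r.c (k, p) := by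
  simp only [dRows, List.forall_mem_cons, dS, dCo, dDot]
  refine ⟨?_, ?_, ?_, ?_, ?_, ?_, ?_, ?_, ?_, ?_, ?_, ?_, ?_⟩
  · linarith only [hp 0]
  · linarith only [hp 1]
  · linarith only [hp 2]
  · linarith only [hp 3]
  · linarith only [hp 4]
  · linarith only [hp 5]
  · linarith only [hp 6]
  · linarith only [hp 7]
  · linarith only [hp 8]
  · linarith only [hp 9]
  · linarith only [hp 10]
  · linarith only [hp 11]
  unfold SatisfiesIneqs at h
  revert h
  iterate 69 refine And.imp (fun h => by linarith only [h]) ?_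
  exact fun h => ⟨by linarith only [h], by simp⟩

/-- The saturation property (Conjecture 2 of Vinberg) for D4: every lattice point of the cone
is a sum with nonnegative integer coefficients of the 52 fundamental generators. -/
theorem sigmaSet_saturation (k : Fin 4 → ℤ) (hk : ∀ i, 0 ≤ k i)
    (p : Fin 12 → ℤ) (hp : p ∈ SigmaSet k) :
    ∃ c : Fin 52 → ℕ, (k, p) = ∑ t, (c t : ℤ) • gens t := by
  have hg := dG16 _ (List.mem_singleton.mpr rfl) ⊤ (by simp) (fun _ _ => trivial) (k, p) trivial
    (fun r hr _ => dRows_nonneg k p hp.1 hp.2 r hr)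
  exact hg
end

section
/- For every k = (k1,k2,k3,k4) ∈ ℤ^4 with nonnegative entries and k ≠ 0, and every p ∈ Σ(k), there exist an index i ∈ {1,2,3,4} with k_i ≥ 1 and a fundamental generator (ε_i, g) such that g ≤ p componentwise and p − g ∈ Σ(k − ε_i). (This is the key reduction step in the proof of Theorem 1 of the paper: every signature in Σ^f(λ) admits a subtraction of an essential signature of some fundamental highest weight ω_i occurring in λ.) -/
/-! Short names for the coefficients which occur. -/

def z0 : ℤ := 0
def p1 : ℤ := 1
def p2 : ℤ := 2
def p3 : ℤ := 3
def n1 : ℤ := -1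
def n2 : ℤ := -2
def n3 : ℤ := -3

set_option maxHeartbeats 4000000 in
/-- The 70 inequalities as coefficient vectors on (k, p): row * (k, p) is nonnegative. -/
def hRows : List (List ℤ) := [
  [p1, z0, z0, z0, z0, z0, z0, z0, z0, z0, z0, z0, z0, z0, z0, n1],
  [z0, p1, z0, z0, z0, z0, z0, z0, z0, z0, z0, z0, z0, z0, n1, z0],
  [z0, z0, p1, z0, z0, z0, z0, z0, z0, z0, z0, z0, n1, z0, z0, z0],
  [z0, z0, z0, p1, z0, z0, z0, n1, z0, z0, z0, z0, z0, z0, z0, z0],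
  [p1, p1, z0, z0, z0, z0, z0, z0, z0, z0, n1, z0, z0, z0, n1, n1],
  [p1, p1, p1, z0, z0, z0, z0, z0, z0, z0, n1, n1, n1, n1, z0, n1],
  [p1, p1, p1, z0, z0, z0, z0, z0, z0, z0, n1, z0, n1, n1, n1, n1],
  [z0, p1, p1, z0, z0, z0, z0, z0, z0, z0, z0, z0, n1, n1, n1, z0],
  [p1, p1, z0, p1, z0, z0, z0, n1, n1, n1, n1, z0, z0, z0, z0, n1],
  [p1, p1, z0, p1, z0, z0, z0, n1, n1, z0, n1, z0, z0, z0, n1, n1],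
  [z0, p1, z0, p1, z0, z0, z0, n1, n1, z0, z0, z0, z0, z0, n1, z0],
  [z0, p1, p1, p1, z0, n1, z0, n1, n1, z0, z0, z0, n1, n1, z0, z0],
  [z0, p1, p1, p1, z0, z0, z0, n1, n1, z0, z0, z0, n1, n1, n1, z0],
  [p1, p1, p1, p1, z0, z0, n1, n1, n1, n1, n1, z0, n1, z0, z0, n1],
  [p1, p1, p1, p1, z0, n1, n1, n1, n1, z0, n1, z0, n1, z0, z0, n1],
  [p1, p1, p1, p1, z0, n1, n1, n1, z0, z0, n1, n1, n1, z0, z0, n1],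
  [p1, p1, p1, p1, z0, n1, z0, n1, z0, z0, n1, n1, n1, n1, z0, n1],
  [p1, p1, p1, p1, z0, z0, z0, n1, n1, z0, n1, z0, n1, n1, n1, n1],
  [p1, p1, p1, p1, z0, n1, z0, n1, n1, z0, n1, z0, n1, n1, z0, n1],
  [p1, p2, p1, p1, n1, z0, n1, n1, n1, n1, n1, n1, n1, z0, n1, z0],
  [p1, p2, p1, p1, n1, n1, n1, n1, n1, z0, n1, n1, n1, z0, n1, z0],
  [p1, p2, p1, p1, z0, z0, n1, n1, n1, n1, n1, n1, n1, z0, n1, n1],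
  [p1, p2, p1, p1, z0, n1, n1, n1, n1, z0, n1, n1, n1, z0, n1, n1],
  [p1, p2, p1, p1, n1, n1, z0, n1, n1, z0, n1, n1, n1, n1, n1, z0],
  [p1, p2, p1, p1, z0, n1, z0, n1, n1, z0, n1, n1, n1, n1, n1, n1],
  [p1, p2, p1, p1, n1, z0, z0, n1, n1, n1, n1, n1, n1, n1, n1, z0],
  [p1, p2, p1, p1, z0, z0, z0, n1, n1, n1, n1, n1, n1, n1, n1, n1],
  [p1, p2, p2, p1, z0, n1, n1, n1, n1, z0, n1, n1, n2, n1, n1, n1],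
  [p1, p2, p2, p1, z0, z0, n1, n1, n1, n1, n1, n1, n2, n1, n1, n1],
  [p1, p2, p2, p1, n1, n1, n1, n1, n1, z0, n1, n1, n2, n1, n1, z0],
  [p1, p2, p2, p1, n1, z0, n1, n1, n1, n1, n1, n1, n2, n1, n1, z0],
  [p1, p2, p2, p1, z0, n1, z0, n1, n1, z0, n1, n1, n2, n2, n1, n1],
  [p1, p2, p1, p2, z0, n1, n1, n2, n1, n1, n1, n1, n1, z0, n1, n1],
  [p1, p2, p1, p2, z0, n1, z0, n2, n1, n1, n1, n1, n1, n1, n1, n1],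
  [p1, p2, p1, p2, n1, n1, n1, n2, n1, n1, n1, n1, n1, z0, n1, z0],
  [p1, p2, p1, p2, n1, n1, z0, n2, n1, n1, n1, n1, n1, n1, n1, z0],
  [p1, p2, p1, p2, z0, n1, n1, n2, n2, n1, n1, z0, n1, z0, n1, n1],
  [p1, p2, p1, p2, z0, n1, z0, n2, n2, n1, n1, z0, n1, n1, n1, n1],
  [p2, p2, p1, p1, z0, z0, n1, n1, n1, n1, n2, n1, n1, z0, n1, n2],
  [p2, p2, p1, p1, z0, z0, z0, n1, n1, n1, n2, n1, n1, n1, n1, n2],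
  [p2, p2, p1, p1, z0, n1, n1, n1, n1, z0, n2, n1, n1, z0, n1, n2],
  [p2, p2, p1, p1, z0, n1, z0, n1, n1, z0, n2, n1, n1, n1, n1, n2],
  [p1, p2, p2, p2, n1, n1, n1, n2, n1, n1, n1, n1, n2, n1, n1, z0],
  [p1, p2, p2, p2, z0, n1, n1, n2, n1, n1, n1, n1, n2, n1, n1, n1],
  [p1, p2, p2, p2, z0, n1, n1, n2, n2, n1, n1, z0, n2, n1, n1, n1],
  [p2, p2, p1, p2, z0, n1, n1, n2, n1, n1, n2, n1, n1, z0, n1, n2],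
  [p2, p2, p1, p2, z0, n1, z0, n2, n1, n1, n2, n1, n1, n1, n1, n2],
  [p2, p2, p1, p2, z0, n1, n1, n2, n2, n1, n2, z0, n1, z0, n1, n2],
  [p2, p2, p1, p2, z0, n1, z0, n2, n2, n1, n2, z0, n1, n1, n1, n2],
  [p2, p2, p2, p1, z0, n1, n1, n1, n1, z0, n2, n1, n2, n1, n1, n2],
  [p2, p2, p2, p1, z0, z0, n1, n1, n1, n1, n2, n1, n2, n1, n1, n2],
  [p2, p2, p2, p1, z0, n1, z0, n1, n1, z0, n2, n1, n2, n2, n1, n2],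
  [p2, p2, p2, p2, z0, n1, n1, n2, n1, n1, n2, n1, n2, n1, n1, n2],
  [p2, p2, p2, p2, z0, n1, n1, n2, n2, n1, n2, z0, n2, n1, n1, n2],
  [p1, p3, p1, p2, z0, n1, n1, n2, n2, n1, n1, n1, n1, z0, n2, n1],
  [p1, p3, p1, p2, z0, n1, z0, n2, n2, n1, n1, n1, n1, n1, n2, n1],
  [p1, p3, p1, p2, n1, n1, n1, n2, n2, n1, n1, n1, n1, z0, n2, z0],
  [p1, p3, p1, p2, n1, n1, z0, n2, n2, n1, n1, n1, n1, n1, n2, z0],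
  [p1, p3, p2, p2, n1, n1, z0, n2, n2, n1, n1, n1, n2, n2, n2, z0],
  [p1, p3, p2, p2, z0, n1, z0, n2, n2, n1, n1, n1, n2, n2, n2, n1],
  [p2, p3, p1, p2, n1, n1, z0, n2, n2, n1, n2, n1, n1, n1, n2, n1],
  [p2, p3, p1, p2, n1, n1, n1, n2, n2, n1, n2, n1, n1, z0, n2, n1],
  [p2, p3, p2, p2, n1, n1, z0, n2, n2, n1, n2, n1, n2, n2, n2, n1],
  [p1, p3, p3, p2, z0, n1, n1, n2, n2, n1, n1, n1, n3, n2, n2, n1],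
  [p1, p3, p3, p2, n1, n1, n1, n2, n2, n1, n1, n1, n3, n2, n2, z0],
  [p3, p3, p1, p2, z0, n1, n1, n2, n2, n1, n3, n1, n1, z0, n2, n3],
  [p3, p3, p1, p2, z0, n1, z0, n2, n2, n1, n3, n1, n1, n1, n2, n3],
  [p3, p3, p3, p2, z0, n1, n1, n2, n2, n1, n3, n1, n3, n2, n2, n3],
  [p2, p3, p3, p2, n1, n1, n1, n2, n2, n1, n2, n1, n3, n2, n2, n1],
  [p3, p3, p2, p2, z0, n1, z0, n2, n2, n1, n3, n1, n2, n2, n2, n3]]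

/-- The coordinates of p, then the coordinates of k. -/
def cRows : List (List ℤ) := [
  [z0, z0, z0, z0, p1, z0, z0, z0, z0, z0, z0, z0, z0, z0, z0, z0],
  [z0, z0, z0, z0, z0, p1, z0, z0, z0, z0, z0, z0, z0, z0, z0, z0],
  [z0, z0, z0, z0, z0, z0, p1, z0, z0, z0, z0, z0, z0, z0, z0, z0],
  [z0, z0, z0, z0, z0, z0, z0, p1, z0, z0, z0, z0, z0, z0, z0, z0],
  [z0, z0, z0, z0, z0, z0, z0, z0, p1, z0, z0, z0, z0, z0, z0, z0],
  [z0, z0, z0, z0, z0, z0, z0, z0, z0, p1, z0, z0, z0, z0, z0, z0],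
  [z0, z0, z0, z0, z0, z0, z0, z0, z0, z0, p1, z0, z0, z0, z0, z0],
  [z0, z0, z0, z0, z0, z0, z0, z0, z0, z0, z0, p1, z0, z0, z0, z0],
  [z0, z0, z0, z0, z0, z0, z0, z0, z0, z0, z0, z0, p1, z0, z0, z0],
  [z0, z0, z0, z0, z0, z0, z0, z0, z0, z0, z0, z0, z0, p1, z0, z0],
  [z0, z0, z0, z0, z0, z0, z0, z0, z0, z0, z0, z0, z0, z0, p1, z0],
  [z0, z0, z0, z0, z0, z0, z0, z0, z0, z0, z0, z0, z0, z0, z0, p1],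
  [p1, z0, z0, z0, z0, z0, z0, z0, z0, z0, z0, z0, z0, z0, z0, z0],
  [z0, p1, z0, z0, z0, z0, z0, z0, z0, z0, z0, z0, z0, z0, z0, z0],
  [z0, z0, p1, z0, z0, z0, z0, z0, z0, z0, z0, z0, z0, z0, z0, z0],
  [z0, z0, z0, p1, z0, z0, z0, z0, z0, z0, z0, z0, z0, z0, z0, z0]]

/-- All rows. -/
def allRows : List (List ℤ) := hRows ++ cRows

set_option maxHeartbeats 4000000 in
/-- The 52 generators as vectors of length 16. -/
def genL : List (List ℤ) := [
  [p1, z0, z0, z0, z0, z0, z0, z0, z0, z0, z0, z0, z0, z0, z0, z0],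
  [p1, z0, z0, z0, z0, z0, z0, z0, z0, z0, z0, z0, z0, z0, z0, p1],
  [p1, z0, z0, z0, z0, z0, z0, z0, z0, z0, z0, p1, z0, z0, z0, z0],
  [p1, z0, z0, z0, z0, z0, z0, z0, z0, z0, p1, z0, z0, z0, z0, z0],
  [p1, z0, z0, z0, z0, z0, z0, z0, z0, p1, z0, z0, z0, z0, z0, z0],
  [p1, z0, z0, z0, z0, z0, p1, z0, z0, z0, z0, z0, z0, z0, z0, z0],
  [p1, z0, z0, z0, p1, z0, z0, z0, z0, z0, z0, z0, z0, z0, z0, z0],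
  [p1, z0, z0, z0, p1, z0, z0, z0, z0, z0, z0, z0, z0, z0, z0, p1],
  [z0, p1, z0, z0, z0, z0, z0, z0, z0, z0, z0, z0, z0, z0, z0, z0],
  [z0, p1, z0, z0, z0, z0, z0, z0, z0, z0, z0, z0, z0, z0, p1, z0],
  [z0, p1, z0, z0, z0, z0, z0, z0, z0, z0, z0, z0, z0, p1, z0, z0],
  [z0, p1, z0, z0, z0, z0, z0, z0, z0, z0, z0, p1, z0, z0, z0, z0],
  [z0, p1, z0, z0, z0, z0, z0, z0, z0, z0, p1, z0, z0, z0, z0, z0],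
  [z0, p1, z0, z0, z0, z0, z0, z0, z0, p1, z0, z0, z0, z0, z0, z0],
  [z0, p1, z0, z0, z0, z0, z0, z0, p1, z0, z0, z0, z0, z0, z0, z0],
  [z0, p1, z0, z0, z0, z0, p1, z0, z0, z0, z0, z0, z0, z0, z0, z0],
  [z0, p1, z0, z0, z0, p1, z0, z0, z0, z0, z0, z0, z0, z0, z0, z0],
  [z0, p1, z0, z0, p1, z0, z0, z0, z0, z0, z0, z0, z0, z0, z0, z0],
  [z0, p1, z0, z0, z0, z0, z0, z0, z0, z0, z0, p1, z0, z0, p1, z0],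
  [z0, p1, z0, z0, z0, z0, z0, z0, z0, p1, z0, z0, z0, z0, p1, z0],
  [z0, p1, z0, z0, z0, z0, p1, z0, z0, z0, z0, z0, z0, z0, p1, z0],
  [z0, p1, z0, z0, z0, p1, z0, z0, z0, z0, z0, z0, z0, z0, p1, z0],
  [z0, p1, z0, z0, p1, z0, z0, z0, z0, z0, z0, z0, z0, z0, p1, z0],
  [z0, p1, z0, z0, z0, z0, z0, z0, z0, p1, z0, z0, z0, p1, z0, z0],
  [z0, p1, z0, z0, z0, z0, p1, z0, z0, z0, z0, z0, z0, p1, z0, z0],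
  [z0, p1, z0, z0, p1, z0, z0, z0, z0, z0, z0, z0, z0, p1, z0, z0],
  [z0, p1, z0, z0, z0, z0, z0, z0, z0, p1, z0, p1, z0, z0, z0, z0],
  [z0, p1, z0, z0, z0, z0, z0, z0, p1, z0, z0, p1, z0, z0, z0, z0],
  [z0, p1, z0, z0, p1, z0, z0, z0, z0, z0, z0, p1, z0, z0, z0, z0],
  [z0, p1, z0, z0, p1, z0, z0, z0, z0, z0, p1, z0, z0, z0, z0, z0],
  [z0, p1, z0, z0, z0, p1, z0, z0, z0, p1, z0, z0, z0, z0, z0, z0],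
  [z0, p1, z0, z0, p1, z0, z0, z0, z0, p1, z0, z0, z0, z0, z0, z0],
  [z0, p1, z0, z0, p1, z0, z0, z0, p1, z0, z0, z0, z0, z0, z0, z0],
  [z0, p1, z0, z0, p1, z0, p1, z0, z0, z0, z0, z0, z0, z0, z0, z0],
  [z0, p1, z0, z0, p1, p1, z0, z0, z0, z0, z0, z0, z0, z0, z0, z0],
  [z0, p1, z0, z0, p2, z0, z0, z0, z0, z0, z0, z0, z0, z0, z0, z0],
  [z0, z0, p1, z0, z0, z0, z0, z0, z0, z0, z0, z0, z0, z0, z0, z0],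
  [z0, z0, p1, z0, z0, z0, z0, z0, z0, z0, z0, z0, z0, p1, z0, z0],
  [z0, z0, p1, z0, z0, z0, z0, z0, z0, z0, z0, z0, p1, z0, z0, z0],
  [z0, z0, p1, z0, z0, z0, z0, z0, z0, z0, z0, p1, z0, z0, z0, z0],
  [z0, z0, p1, z0, z0, z0, p1, z0, z0, z0, z0, z0, z0, z0, z0, z0],
  [z0, z0, p1, z0, z0, p1, z0, z0, z0, z0, z0, z0, z0, z0, z0, z0],
  [z0, z0, p1, z0, p1, z0, z0, z0, z0, z0, z0, z0, z0, z0, z0, z0],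
  [z0, z0, p1, z0, z0, z0, p1, z0, z0, z0, z0, z0, z0, p1, z0, z0],
  [z0, z0, z0, p1, z0, z0, z0, z0, z0, z0, z0, z0, z0, z0, z0, z0],
  [z0, z0, z0, p1, z0, z0, z0, z0, z0, p1, z0, z0, z0, z0, z0, z0],
  [z0, z0, z0, p1, z0, z0, z0, z0, p1, z0, z0, z0, z0, z0, z0, z0],
  [z0, z0, z0, p1, z0, z0, z0, p1, z0, z0, z0, z0, z0, z0, z0, z0],
  [z0, z0, z0, p1, z0, z0, p1, z0, z0, z0, z0, z0, z0, z0, z0, z0],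
  [z0, z0, z0, p1, z0, p1, z0, z0, z0, z0, z0, z0, z0, z0, z0, z0],
  [z0, z0, z0, p1, p1, z0, z0, z0, z0, z0, z0, z0, z0, z0, z0, z0],
  [z0, z0, z0, p1, z0, p1, z0, z0, z0, p1, z0, z0, z0, z0, z0, z0]]

/-- For every generator, the bit mask of the rows which vanish on it. -/
def zeroL : List ℕ := [
  72534368585257033071074446, 70117375368141097316909055, 72383281662841683944512686,
  72459991313151836158951422, 72496618458448350925045134, 72529673978993145078676622,
  72533206944787998875065486, 70116516946027774721654783, 67698665306798516372242445,
  66489739487183887197673183, 67094202399243003746523373, 67547549579346687725502509,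
  67623956011283329994711933, 67660886374935559210541325, 67679775850314247856094989,
  67693942940315646727086093, 67696304123557081550014477, 67697484715177798960939021,
  66339804341905565897430783, 66453141144123596295780319, 66485526817485869859665631,
  66488558894436443800198879, 66488881065070564602418911, 67057489646561492189264365,
  67089950439964450776152301, 67093340302192368035502317, 67509770653232867857506605,
  67529840705035926555852589, 67546368987730421554446381, 67623078638022775424410493,
  67658525205763745760274701, 67659705783319292493177101, 67678917428200925260840717,
  67692762348699346154348557, 67695123531940814271137805, 67697484715182250201186317,
  58027258749881482974594843, 57423466734910033491337211, 57726207886598543092219903,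
  57876257431984328891008827, 58022575672979148961802011, 58025011976616316602011419,
  58026081833198113080739611, 57419254065212016153329659, 38684445636047416179294455,
  38646666705311185003618807, 38666736757114243701964791, 38676181494702394300170239,
  38679723271254772805066999, 38682084455624032508037367, 38683265044426700422119671,
  38645486112563741606144503]

set_option maxHeartbeats 4000000 in
/-- Linear relations between the rows: both sides have equal sums. -/
def relL : List (List ℕ × List ℕ) := [
  ([23, 70, 77], [1, 18, 81]), ([1, 2], [7, 79]), ([25, 70, 77], [7, 8, 81]), ([16, 76, 77], [0, 11, 74]),
  ([13, 16], [52, 80]), ([19, 70, 77], [1, 13, 81]), ([15, 72], [16, 79]), ([2, 34], [42, 79]),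
  ([1, 16], [24, 74]), ([1, 15], [22, 74]), ([23, 70], [24, 81]), ([0, 7], [6, 76]), ([20, 72], [23, 79]),
  ([20, 70], [22, 81]), ([5, 56], [20, 26]), ([5, 76, 77], [0, 7, 80]), ([3, 23], [35, 75]),
  ([34, 72], [35, 79]), ([2, 23], [29, 72]), ([1, 3], [10, 74]), ([2, 20], [29, 79]), ([5, 35], [16, 25]),
  ([1, 34], [56, 74]), ([1, 30], [7, 19]), ([29, 71], [30, 75]), ([0, 22], [40, 76]), ([2, 35], [42, 72]),
  ([1, 35], [57, 74]), ([7, 16], [31, 74]), ([1, 42], [7, 34]), ([7, 42], [64, 74]), ([3, 7], [12, 74]),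
  ([19, 72], [25, 79]), ([6, 11], [31, 77]), ([0, 57], [60, 76]), ([33, 81], [35, 70]), ([42, 70], [43, 81]),
  ([7, 14], [27, 77]), ([1, 14], [22, 77]), ([7, 35], [58, 74]), ([0, 64], [68, 76]), ([85], [3, 73]),
  ([14, 74], [15, 77]), ([1, 37], [55, 77]), ([2, 19], [30, 79]), ([0, 12], [17, 76]),
  ([43, 75, 80], [11, 15, 71]), ([34, 70, 77], [36, 74, 81]), ([33, 77], [37, 74]), ([2, 25], [30, 72]),
  ([43, 77], [44, 74]), ([1, 29], [7, 20]), ([7, 37], [59, 77]), ([82], [0, 81]), ([0, 31], [51, 76]),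
  ([28, 81], [30, 70]), ([67, 76, 81], [0, 68, 70]), ([50, 76, 81], [0, 30, 70]),
  ([64, 70, 77], [7, 44, 81]), ([8, 11], [37, 80]), ([0, 33], [46, 76]), ([55, 81], [57, 70]),
  ([52, 76, 81], [0, 42, 70]), ([84], [2, 78]), ([1, 36], [54, 77]), ([45, 76, 81], [0, 34, 70]),
  ([41, 76, 81], [0, 23, 70]), ([32, 81], [34, 70]), ([39, 76, 81], [0, 25, 70]), ([8, 23], [60, 80]),
  ([0, 58], [62, 76]), ([5, 13], [50, 80]), ([63, 81], [64, 70]), ([0, 56], [61, 76]),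
  ([13, 72, 75], [2, 9, 80]), ([69, 76, 81], [0, 62, 70]), ([49, 76, 81], [0, 29, 70]), ([1, 44], [7, 36]),
  ([0, 1], [4, 76]), ([7, 13], [28, 77]), ([5, 11], [31, 80]), ([0, 36], [47, 76]), ([0, 37], [48, 76]),
  ([19, 70], [21, 81]), ([66, 76, 81], [0, 60, 70]), ([2, 8], [13, 72]), ([58, 70], [59, 81]),
  ([0, 11], [18, 76]), ([0, 10], [9, 76]), ([25, 70], [26, 81]), ([83], [1, 80]), ([0, 44], [53, 76]),
  ([0, 21], [38, 76]), ([54, 81], [56, 70]), ([27, 81], [29, 70]), ([65, 76, 81], [0, 61, 70])]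

set_option maxHeartbeats 4000000 in
/-- The faces met by the reduction: mask of tight rows, generator to subtract, and
for every facet avoiding the generator, its row and the (relative) position of the next face. -/
def nodeL : List (ℕ × ℕ × List (ℕ × ℕ)) := [
  (0, 38, [(78, 0)]), (302231454903657293676544, 47, [(73, 0)]),
  (311676187869396584103936, 3, [(76, 41), (0, 0)]), (311676187869396584103937, 7, [(81, 1), (70, 0)]),
  (312856779490113995407361, 1, [(81, 1)]), (7565231105557171632340993, 29, [(76, 10), (70, 0)]),
  (7566411697177889043644417, 12, [(76, 0)]),
  (7641969560903803367063553, 27, [(74, 2), (77, 14), (1, 0), (6, 40)]),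
  (7641969560903803367063571, 46, [(74, 0)]), (7660859026835281947918355, 39, [(77, 14), (6, 43)]),
  (7660859026835281947918337, 43, [(79, 2), (2, 1), (72, 0)]),
  (7665581393318151593132033, 37, [(79, 3), (2, 26)]),
  (27003672140669348743217157, 24, [(79, 173), (72, 25)]),
  (8265321936642596535271425, 40, [(2, 172), (72, 1), (5, 0)]), (8265321936642596535271457, 39, [(2, 172)]),
  (8270044303125466180485121, 39, [(2, 180), (77, 27)]),
  (7640788969283085955760129, 27, [(74, 17), (77, 2), (1, 0), (6, 51)]),
  (7640788969283085955760147, 46, [(74, 0)]), (7659678435214564536614931, 39, [(77, 2), (6, 55)]),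
  (7791904696734914602598401, 32, [(74, 11), (70, 2), (1, 0), (6, 57)]),
  (7791904696734914602598419, 46, [(74, 0)]), (7810794162666393183453203, 42, [(70, 2), (6, 65)]),
  (7793085288355632013901825, 14, [(74, 5), (1, 0), (6, 26)]), (7793085288355632013901843, 46, [(74, 0)]),
  (7811974754287110594756627, 43, [(79, 1), (72, 0)]), (7816697120769980239970323, 37, [(79, 1)]),
  (8416437664094425182109715, 40, [(2, 87), (72, 0)]),
  (8421160030577294827323411, 36, [(2, 177), (11, 82), (32, 79)]),
  (7811974754287110594756609, 43, [(2, 92), (79, 1), (72, 0)]),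
  (7816697120769980239970305, 37, [(2, 104), (79, 13)]),
  (8416437664094425182109697, 40, [(2, 105), (72, 12)]),
  (7810794162666393183453185, 43, [(2, 99), (79, 1), (72, 0)]),
  (7815516529149262828666881, 37, [(2, 99), (79, 9)]), (8415257072473707770806273, 40, [(2, 101), (72, 8)]),
  (7659678435214564536614913, 43, [(79, 4), (2, 1), (72, 0)]),
  (7664400801697434181828609, 37, [(79, 5), (2, 1)]), (27002491549048631331913733, 24, [(79, 143), (72, 0)]),
  (27007213915531500977127429, 25, [(79, 155), (70, 0), (8, 105)]),
  (27008394507152218388430853, 23, [(79, 157), (75, 108)]),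
  (8264141345021879123968001, 40, [(2, 140), (72, 1), (5, 0)]), (8264141345021879123968033, 39, [(2, 140)]),
  (8268863711504748769181697, 39, [(2, 151), (77, 0)]),
  (8419979438956577416019969, 42, [(2, 157), (70, 0), (11, 117)]),
  (8421160030577294827323393, 36, [(2, 171), (11, 125), (32, 119)]),
  (387234051595310907523072, 7, [(81, 21), (70, 0)]), (388414643216028318826496, 1, [(81, 0)]),
  (2806266282445286668238848, 27, [(74, 9), (77, 44), (1, 3), (7, 0)]),
  (2806266282445286668238976, 2, [(77, 44), (0, 0)]), (7641969560903803367063745, 18, [(77, 0)]),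
  (7793085288355632013902017, 46, [(74, 29)]), (2806266282445286668238850, 46, [(74, 0)]),
  (2825155748376765249093634, 39, [(77, 49), (7, 0), (11, 20)]),
  (2825155748376765249093762, 2, [(77, 36), (0, 0)]), (7660859026835281947918547, 18, [(77, 0)]),
  (7811974754287110594756819, 43, [(2, 59), (72, 0)]), (7816697120769980239970515, 37, [(2, 149)]),
  (2825155748376765249093632, 43, [(79, 2), (2, 1), (72, 0)]),
  (2829878114859634894307328, 37, [(79, 4), (2, 86)]), (22167968862210832044392452, 24, [(79, 5), (72, 85)]),
  (3429618658184079836446720, 40, [(2, 4), (72, 2), (5, 1), (11, 0)]),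
  (3429618658184079836448768, 5, [(72, 2)]), (3429618658184079836446752, 39, [(2, 3)]),
  (3434341024666949481660416, 39, [(2, 88), (77, 98), (11, 0)]), (3434341024666949481662464, 2, [(77, 100)]),
  (22772431772018146631745540, 5, [(0, 121), (72, 86), (5, 0)]), (22772431772018146631745572, 2, [(0, 121)]),
  (2805085690824569256935424, 27, [(74, 71), (77, 8), (1, 2), (7, 0)]),
  (2805085690824569256935552, 2, [(77, 8), (0, 0)]), (7640788969283085955760321, 18, [(77, 8)]),
  (2805085690824569256935426, 46, [(74, 0)]), (2823975156756047837790210, 39, [(77, 11), (7, 2), (11, 0)]),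
  (2823975156756047837792258, 6, [(70, 0)]), (2825155748376765249095682, 2, [(77, 11)]),
  (2823975156756047837790338, 2, [(77, 12), (0, 0)]), (7659678435214564536615123, 18, [(77, 12)]),
  (2956201418276397903773696, 32, [(74, 46), (70, 15), (1, 5), (7, 0)]),
  (2956201418276397903773824, 6, [(0, 0), (70, 15)]), (7791904696734914602598593, 46, [(74, 0)]),
  (7810794162666393183453377, 25, [(70, 0), (1, 8)]), (7811974754287110594756801, 43, [(2, 18), (72, 0)]),
  (7816697120769980239970497, 37, [(2, 18)]), (2956201418276397903773698, 46, [(74, 0)]),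
  (2975090884207876484628482, 42, [(7, 3), (70, 18), (11, 0)]), (2975090884207876484630530, 6, [(70, 0)]),
  (2976271475828593895933954, 43, [(72, 0), (79, 19)]), (2980993842311463541147650, 37, [(79, 22)]),
  (2975090884207876484628610, 6, [(70, 2), (0, 0)]), (7810794162666393183453395, 43, [(2, 96), (72, 0)]),
  (7815516529149262828667091, 37, [(2, 114)]), (2976271475828593895932034, 43, [(2, 21), (72, 0)]),
  (2980993842311463541145730, 37, [(2, 21)]), (2957382009897115315077120, 14, [(74, 23), (1, 8), (7, 0)]),
  (2957382009897115315077248, 46, [(74, 0)]), (2976271475828593895932032, 43, [(2, 1), (72, 0)]),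
  (2980993842311463541145728, 37, [(2, 1)]), (22319084589662660691230852, 5, [(0, 2), (72, 0)]),
  (22323806956145530336444548, 4, [(0, 2), (75, 0)]), (22361585888008487498154116, 0, [(0, 51)]),
  (27154787868121177390055621, 24, [(1, 15), (72, 0)]),
  (27159510234604047035269317, 23, [(1, 105), (75, 49)]), (2957382009897115315077122, 46, [(74, 0)]),
  (2976271475828593895931906, 43, [(79, 1), (72, 0)]), (2980993842311463541145602, 37, [(79, 2)]),
  (3580734385635908483284994, 40, [(2, 7), (72, 1), (11, 0)]), (3580734385635908483287042, 5, [(72, 3)]),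
  (3585456752118778128498690, 36, [(2, 6), (11, 2), (32, 0)]), (3585457022335026353668098, 4, [(0, 0)]),
  (8421274440550264711675923, 19, [(11, 59)]), (3585456752118778128500738, 0, [(0, 1), (32, 0)]),
  (3585457022335026353670146, 4, [(0, 57)]), (8421160030580593392994323, 41, [(2, 95)]),
  (22923547499469975278583942, 5, [(0, 2), (72, 0)]), (22928269865952844923797638, 4, [(0, 92), (75, 0)]),
  (22966048797815802085507206, 0, [(0, 105)]), (27759250777928491977408727, 20, [(72, 90), (5, 77)]),
  (2976271475828593895931904, 43, [(2, 4), (79, 1), (72, 0)]),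
  (2980993842311463541145600, 37, [(2, 13), (79, 44)]),
  (3580734385635908483284992, 40, [(2, 1), (72, 43), (11, 0)]), (3580734385635908483287040, 5, [(72, 45)]),
  (22923547499469975278583812, 5, [(0, 16), (72, 58)]), (22319084589662660691230724, 5, [(0, 0), (72, 9)]),
  (27154787868121177390055429, 24, [(79, 14), (72, 12)]),
  (2975090884207876484628480, 43, [(2, 4), (79, 1), (72, 0)]),
  (2979813250690746129842176, 37, [(2, 4), (79, 34)]),
  (3579553794015191071981568, 40, [(2, 1), (72, 33), (11, 0)]), (3579553794015191071983616, 5, [(72, 33)]),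
  (22922366907849257867280388, 5, [(0, 8), (72, 47)]), (22317903998041943279927300, 5, [(0, 3), (72, 0)]),
  (22322626364524812925140996, 25, [(79, 45), (70, 1), (8, 0)]), (22322626364524812925149444, 4, [(0, 3)]),
  (22323806956145530336444420, 4, [(0, 3), (75, 15)]), (27153607276500459978752005, 24, [(79, 3), (72, 0)]),
  (27158329642983329623965701, 25, [(79, 67), (70, 1), (8, 0)]),
  (27158329642983329623974149, 23, [(79, 42)]), (27159510234604047035269125, 23, [(79, 80), (75, 15)]),
  (27758070186307774566105093, 33, [(72, 64), (70, 0), (1, 48)]),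
  (27759250777928491977408517, 20, [(72, 78), (80, 0)]),
  (28968176597543121152114693, 15, [(72, 84), (1, 54)]),
  (2823975156756047837790208, 43, [(79, 14), (2, 1), (72, 0)]),
  (2828697523238917483003904, 37, [(79, 16), (2, 1)]), (22166788270590114633089028, 24, [(79, 29), (72, 0)]),
  (22171510637072984278302724, 25, [(79, 30), (70, 2), (8, 0)]), (22171510637072984278311172, 4, [(0, 0)]),
  (27007213915531500977135877, 23, [(79, 50)]), (22172691228693701689606148, 23, [(79, 6), (75, 0)]),
  (22210470160556658851315716, 2, [(0, 1), (77, 0)]), (22361585888008487498153988, 0, [(0, 3)]),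
  (27046173439015175550140421, 11, [(77, 2), (6, 0)]), (27046173439015175550140613, 18, [(77, 0)]),
  (27197289166467004196978885, 10, [(1, 69)]), (27197289166467004196978693, 10, [(79, 66)]),
  (22777154138501016276959236, 2, [(0, 44), (77, 26), (8, 0)]), (22777154138501016276967684, 4, [(0, 44)]),
  (3428438066563362425143296, 40, [(2, 16), (72, 2), (5, 1), (11, 0)]),
  (3428438066563362425145344, 5, [(72, 2)]), (3428438066563362425143328, 39, [(2, 15)]),
  (3433160433046232070356992, 39, [(2, 15), (77, 1), (11, 0)]), (3433160433046232070359040, 2, [(77, 1)]),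
  (3584276160498060717195264, 42, [(2, 15), (70, 2), (11, 0)]),
  (3584276160498060717197312, 6, [(70, 4), (0, 0)]), (8419979438956577416398849, 34, [(70, 8)]),
  (3585456752118778128498688, 36, [(2, 16), (11, 2), (32, 0)]), (3585456752119048711438336, 4, [(0, 0)]),
  (8421160031105330991595521, 19, [(11, 2)]), (3585456752118778128500736, 0, [(0, 4), (32, 0)]),
  (3585456752119048711440384, 4, [(0, 0)]), (8421160031105330991974401, 30, [(1, 0)]),
  (8421274440553563277346835, 41, [(2, 0)]), (27765153734905353047754967, 21, [(5, 61)]),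
  (8421160030577294827702273, 41, [(2, 46)]), (22771251180397429220442116, 5, [(0, 9), (72, 1), (5, 0)]),
  (22771251180397429220442148, 2, [(0, 9)]), (22775973546880298865655812, 2, [(0, 20), (77, 1), (8, 0)]),
  (22775973546880298865664260, 4, [(0, 20)]), (22927089274332127512494084, 6, [(0, 25), (70, 3), (8, 0)]),
  (22927089274332127512502532, 4, [(0, 0)]), (27762792552790644211327237, 31, [(70, 0)]),
  (27763973144411361622630661, 19, [(80, 46)]), (22928269865952844923797508, 4, [(0, 36), (75, 0)]),
  (22966048797815802085507076, 0, [(0, 37)]),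
  (27606954458855945919266821, 33, [(72, 12), (70, 5), (1, 2), (5, 0)]),
  (27606954458855945919266853, 28, [(70, 5), (1, 0)]), (27606954458855945919267063, 18, [(77, 2)]),
  (27606954458855945919267031, 18, [(77, 0)]), (27758070186307774566105303, 20, [(72, 18), (5, 0)]),
  (38638402562839437138460919, 48, [(72, 18)]), (27608135050476663330570245, 20, [(72, 9), (80, 1), (5, 0)]),
  (27608135050476663330570277, 18, [(80, 1)]), (28817060870091292505276421, 15, [(72, 9), (5, 0)]),
  (28817060870091292505276453, 11, [(1, 2), (13, 0)]), (28817060871217468634832933, 26, [(1, 0)]),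
  (38639583155586330679320823, 48, [(8, 37)]), (38639583154460154549764343, 48, [(72, 33)]),
  (27611676825338815564480517, 28, [(77, 6), (70, 2), (1, 1), (8, 0)]),
  (27611676825338815564488965, 31, [(70, 2)]), (27611676825338815564480727, 18, [(77, 7)]),
  (27612857416959532975783941, 18, [(77, 18), (80, 1), (8, 0)]), (27612857416959532975792389, 19, [(80, 1)]),
  (28821783236574162150490117, 11, [(77, 23), (8, 0)]), (28821783236574162150498565, 26, [(77, 24)]),
  (27762792552790644211318789, 31, [(70, 14), (75, 6), (1, 2), (20, 1), (11, 0)]),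
  (27762792552790644211697669, 34, [(70, 14)]), (27762792552790644757626885, 51, [(75, 6)]),
  (27762792552790644211318999, 22, [(70, 1), (5, 0)]), (38643124929322306783674615, 50, [(70, 21)]),
  (27763973144411361622622423, 19, [(5, 20), (75, 13), (11, 0)]),
  (27763973147229412773972183, 21, [(5, 20)]),
  (27800571484653601373028357, 17, [(1, 3), (20, 1), (70, 9), (11, 0)]),
  (27800571484653601373407237, 16, [(20, 1)]), (27800571484653601919336453, 35, [(1, 3), (11, 0)]),
  (27800571484653601919715333, 34, [(1, 9)]), (27800571484653601373028567, 9, [(20, 1), (5, 0)]),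
  (38680903861185263945384183, 44, [(20, 1)]), (27800571484653601919336663, 22, [(5, 0), (11, 6)]),
  (38680903861185264491692279, 50, [(11, 13)]),
  (27763973144411361622622213, 19, [(80, 6), (75, 1), (11, 0)]), (27763973144411361623001093, 21, [(80, 6)]),
  (27801752076274318784331781, 8, [(1, 1), (11, 0)]), (27801752076274318784710661, 16, [(1, 1)]),
  (27801752076274318784331991, 9, [(5, 1), (11, 0)]), (27801752079092369935681751, 21, [(5, 7)]),
  (38682084452805981356687607, 44, [(11, 6)]), (28972898964025990797328389, 8, [(1, 3), (8, 1), (11, 0)]),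
  (28972898964025990797707269, 16, [(1, 3), (8, 1)]), (28972898964025990797336837, 13, [(1, 4), (11, 0)]),
  (28972898978095612169677061, 30, [(1, 4)]), (38644305520943024194978039, 44, [(8, 2), (11, 0)]),
  (38644305523761075346327799, 51, [(75, 0)]), (38682084455624032508037367, 49, [(3, 300)]),
  (38644305522069750181011959, 45, [(11, 0)]), (38645486112563741606144503, 51, [(3, 300)])]

def dot : List ℤ → List ℤ → ℤ
  | a :: r, b :: x => a * b + dot r x
  | _, _ => 0

def ladd : List ℤ → List ℤ → List ℤ
  | a :: r, b :: x => (a + b) :: ladd r x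
  | [], x => x
  | r, [] => r

def rowOf (j : ℕ) : List ℤ := allRows.getD j []

def rowSum (l : List ℕ) : List ℤ := l.foldr (fun j s => ladd (rowOf j) s) []

def tb (m n : ℕ) : Bool := Nat.beq (Nat.land (Nat.shiftRight m n) 1) 1

def relFires (T : ℕ) (A B : List ℕ) : Bool :=
  A.all (fun j => tb T j) && !B.all (fun j => tb T j)

def closePass (T : ℕ) : List (List ℕ × List ℕ) → ℕ
  | [] => T
  | r :: l =>
    bif relFires T r.1 r.2 then closePass (r.2.foldr (fun j s => s ||| 1 <<< j) T) l
    else bif relFires T r.2 r.1 then closePass (r.1.foldr (fun j s => s ||| 1 <<< j) T) l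
    else closePass T l

def okFind (T O : ℕ) (A B : List ℕ) : Option ℕ :=
  bif B.all (fun j => tb O j) then
    match A.find? (fun j => !tb O j) with
    | none => none
    | some j => bif A.all (fun a => tb T a || Nat.beq a j) then some j else none
  else none

def okPass (T O : ℕ) : List (List ℕ × List ℕ) → ℕ
  | [] => O
  | r :: l =>
    match okFind T O r.1 r.2 with
    | some j => okPass T (O ||| 1 <<< j) l
    | none =>
      match okFind T O r.2 r.1 with
      | some j => okPass T (O ||| 1 <<< j) l
      | none => okPass T O l

def closeTo (W : ℕ) : ℕ → ℕ → Bool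
  | 0, T => (W &&& T) == W
  | n + 1, T => if (W &&& T) == W then true else closeTo W n (closePass T relL)

def okTo (T W : ℕ) : ℕ → ℕ → Bool
  | 0, O => (W &&& O) == W
  | n + 1, O => if (W &&& O) == W then true else okTo T W n (okPass T O relL)

/-- The mask of the four rows given by the coordinates of k. -/
def kMask : ℕ := 15 <<< 82

def fullMask : ℕ := 1 <<< 86 - 1

def checkNode (n : ℕ × ℕ × List (ℕ × ℕ)) (rest : List (ℕ × ℕ × List (ℕ × ℕ))) : Bool :=
  decide (n.2.1 < 52) &&
  n.2.2.all (fun e => decide (dot (rowOf e.1) (genL.getD n.2.1 []) ≤ 1) &&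
    closeTo (rest.getD e.2 (kMask, 0, [])).1 3 (n.1 ||| 1 <<< e.1)) &&
  okTo n.1 fullMask 6 (n.2.2.foldr (fun e s => s ||| 1 <<< e.1) (zeroL.getD n.2.1 0))

def checkAll : List (ℕ × ℕ × List (ℕ × ℕ)) → Bool
  | [] => true
  | n :: rest => checkNode n rest && checkAll rest

theorem checkAll_nodeL : checkAll nodeL = true := by decide +kernel

theorem rel_ok : ∀ r ∈ relL, rowSum r.1 = rowSum r.2 := by decide +kernel

theorem gen_nonneg : ∀ t < 52, ∀ j < 86, 0 ≤ dot (rowOf j) (genL.getD t []) ∧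
    ((zeroL.getD t 0).testBit j = true → dot (rowOf j) (genL.getD t []) = 0) := by
  decide +kernel

theorem zero_lt : ∀ t < 52, zeroL.getD t 0 < 2 ^ 86 := by decide +kernel

theorem tb_eq (m n : ℕ) : tb m n = m.testBit n := by
  have h : tb m n = Nat.beq (m >>> n &&& 1) 1 := rfl
  rw [h, Bool.eq_iff_iff, Nat.beq_eq, Nat.testBit, bne_iff_ne, Nat.and_comm, Nat.one_and_eq_mod_two]
  omega

theorem dot_nil (x : List ℤ) : dot [] x = 0 := by simp [dot]

theorem dot_ladd (a b x : List ℤ) : dot (ladd a b) x = dot a x + dot b x := by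
  induction a generalizing b x with
  | nil => simp [ladd, dot]
  | cons a r ih =>
    cases b with
    | nil => simp [ladd, dot]
    | cons b s =>
      cases x with
      | nil => simp [dot]
      | cons c x => simp only [ladd, dot, ih]; ring

theorem dot_rowSum (l : List ℕ) (x : List ℤ) :
    dot (rowSum l) x = (l.map fun j => dot (rowOf j) x).sum := by
  induction l with
  | nil => simp [rowSum, dot]
  | cons a l ih =>
    have : rowSum (a :: l) = ladd (rowOf a) (rowSum l) := rfl
    rw [this, dot_ladd, ih]; simp

theorem rel_sum (r : List ℕ × List ℕ) (hr : r ∈ relL) (x : List ℤ) :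
    (r.1.map fun j => dot (rowOf j) x).sum = (r.2.map fun j => dot (rowOf j) x).sum := by
  rw [← dot_rowSum, ← dot_rowSum, rel_ok r hr]

theorem rowOf_big {j : ℕ} (hj : 86 ≤ j) : rowOf j = [] := by
  have : allRows.length = 86 := by decide +kernel
  simp [rowOf, List.getD_eq_getElem?_getD, List.getElem?_eq_none (l := allRows) (i := j) (by omega)]

theorem testBit_or_one (T i j : ℕ) : (T ||| 1 <<< i).testBit j = true ↔ T.testBit j = true ∨ j = i := by
  rw [Nat.testBit_or, Nat.one_shiftLeft, Nat.testBit_two_pow, Bool.or_eq_true,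
    decide_eq_true_eq, @eq_comm _ i j]

theorem testBit_foldr {α : Type*} (f : α → ℕ) (l : List α) (T j : ℕ) :
    (l.foldr (fun e s => s ||| 1 <<< f e) T).testBit j = true ↔
      T.testBit j = true ∨ ∃ e ∈ l, j = f e := by
  induction l with
  | nil => simp
  | cons a l ih => 
    rw [List.foldr_cons, testBit_or_one, ih, List.exists_mem_cons_iff, or_assoc]
    exact or_congr_right or_comm

/-- A property of masks: all rows of the mask satisfy `P`. -/
def Holds (P : ℕ → Prop) (T : ℕ) : Prop := ∀ j, T.testBit j = true → P j

theorem Holds.mono {P : ℕ → Prop} {T W : ℕ} (h : Holds P T) (hW : (W &&& T) == W) : Holds P W := by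
  intro j hj
  rw [beq_iff_eq] at hW
  rw [← hW, Nat.testBit_and] at hj
  exact h j (by simpa using (Bool.and_eq_true_iff.1 hj).2)

theorem sum_nonpos_of (l : List ℕ) (f : ℕ → ℤ) (h : ∀ j ∈ l, f j ≤ 0) : (l.map f).sum ≤ 0 := by
  induction l with
  | nil => simp
  | cons a l ih =>
    have h1 := h a (by simp)
    have h2 := ih (fun j hj => h j (by simp [hj]))
    simp only [List.map_cons, List.sum_cons]; omega

theorem le_of_sum_nonpos (l : List ℕ) (f : ℕ → ℤ) (h0 : ∀ j ∈ l, 0 ≤ f j)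
    (h : (l.map f).sum ≤ 0) : ∀ j ∈ l, f j ≤ 0 := by
  induction l with
  | nil => simp
  | cons a l ih =>
    have h1 := h0 a (by simp)
    have h2 : 0 ≤ (l.map f).sum := List.sum_nonneg (by
      intro x hx
      obtain ⟨j, hj, rfl⟩ := List.mem_map.1 hx
      exact h0 j (by simp [hj]))
    simp only [List.map_cons, List.sum_cons] at h
    have h3 := ih (fun j hj => h0 j (by simp [hj])) (by omega)
    intro j hj
    rcases List.mem_cons.1 hj with rfl | hj
    · omega
    · exact h3 j hj

theorem relFires_ok (f : ℕ → ℤ) (h0 : ∀ j, 0 ≤ f j) (A B : List ℕ)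
    (hAB : (A.map f).sum = (B.map f).sum) (T : ℕ) (hT : Holds (fun j => f j ≤ 0) T)
    (h : relFires T A B = true) :
    Holds (fun j => f j ≤ 0) (B.foldr (fun j s => s ||| 1 <<< j) T) := by
  simp only [relFires, Bool.and_eq_true, List.all_eq_true, tb_eq] at h
  intro j hj
  rcases (testBit_foldr (fun j => j) B T j).1 hj with hj | ⟨e, he, rfl⟩
  · exact hT j hj
  · refine le_of_sum_nonpos B f (fun j _ => h0 j) ?_ _ he
    rw [← hAB]
    exact sum_nonpos_of A f (fun j hj => hT j (h.1 j hj))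

theorem closePass_ok (f : ℕ → ℤ) (h0 : ∀ j, 0 ≤ f j) (l : List (List ℕ × List ℕ))
    (hl : ∀ r ∈ l, (r.1.map f).sum = (r.2.map f).sum) (T : ℕ) (hT : Holds (fun j => f j ≤ 0) T) :
    Holds (fun j => f j ≤ 0) (closePass T l) := by
  induction l generalizing T with
  | nil => exact hT
  | cons r l ih =>
    have h := hl r (by simp)
    have ih' := ih (fun r hr => hl r (by simp [hr]))
    unfold closePass
    rcases h1 : relFires T r.1 r.2 with _ | _
    · rcases h2 : relFires T r.2 r.1 with _ | _
      · exact ih' _ hT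
      · exact ih' _ (relFires_ok f h0 _ _ h.symm _ hT h2)
    · exact ih' _ (relFires_ok f h0 _ _ h _ hT h1)

theorem closeTo_ok (f : ℕ → ℤ) (h0 : ∀ j, 0 ≤ f j)
    (hl : ∀ r ∈ relL, (r.1.map f).sum = (r.2.map f).sum) (W n T : ℕ)
    (hT : Holds (fun j => f j ≤ 0) T) (h : closeTo W n T = true) : Holds (fun j => f j ≤ 0) W := by
  induction n generalizing T with
  | zero => exact hT.mono h
  | succ n ih =>
    unfold closeTo at h
    split_ifs at h with h'
    · exact hT.mono h'
    · exact ih _ (closePass_ok f h0 _ hl _ hT) h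

theorem sum_neg_map (l : List ℕ) (w : ℕ → ℤ) : (l.map fun j => - w j).sum = - (l.map w).sum := by
  induction l with
  | nil => simp
  | cons a l ih => simp only [List.map_cons, List.sum_cons, ih]; ring

theorem okFind_ok (w : ℕ → ℤ) (A B : List ℕ) (hAB : (A.map w).sum = (B.map w).sum)
    (T O i : ℕ) (hT : Holds (fun j => w j ≤ 0) T) (hO : Holds (fun j => 0 ≤ w j) O)
    (h : okFind T O A B = some i) : Holds (fun j => 0 ≤ w j) (O ||| 1 <<< i) := by
  simp only [okFind, tb_eq] at h
  rcases hb : B.all (fun j => O.testBit j) with _ | _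
  · rw [hb] at h; simp at h
  rw [hb] at h
  rw [List.all_eq_true] at hb
  have hB : 0 ≤ (B.map w).sum := List.sum_nonneg (by
    intro x hx
    obtain ⟨j, hj, rfl⟩ := List.mem_map.1 hx
    exact hO j (hb j hj))
  rw [cond_true] at h
  split at h
  · simp at h
  rename_i i' hi
  have hiA := List.mem_of_find?_eq_some hi
  rcases h2 : A.all (fun a => T.testBit a || Nat.beq a i') with _ | _
  · rw [h2] at h; simp at h
  rw [h2, cond_true, Option.some.injEq] at h
  subst h
  rw [List.all_eq_true] at h2
  intro j hj
  rcases (testBit_or_one O i' j).1 hj with hj | rfl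
  · exact hO j hj
  by_contra hneg
  have hle : ∀ a ∈ A, w a ≤ 0 := by
    intro a ha
    have := h2 a ha
    rw [Bool.or_eq_true, Nat.beq_eq] at this
    rcases this with h3 | rfl
    · exact hT a h3
    · omega
  have h5 := le_of_sum_nonpos A (fun a => - w a) (fun a ha => by have := hle a ha; omega) (by
    rw [sum_neg_map, hAB]; omega) j hiA
  omega

theorem okPass_ok (w : ℕ → ℤ) (T : ℕ) (hT : Holds (fun j => w j ≤ 0) T)
    (l : List (List ℕ × List ℕ)) (hl : ∀ r ∈ l, (r.1.map w).sum = (r.2.map w).sum)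
    (O : ℕ) (hO : Holds (fun j => 0 ≤ w j) O) : Holds (fun j => 0 ≤ w j) (okPass T O l) := by
  induction l generalizing O with
  | nil => exact hO
  | cons r l ih =>
    have h := hl r (by simp)
    have ih' := ih (fun r hr => hl r (by simp [hr]))
    unfold okPass
    split
    · rename_i j hj
      exact ih' _ (okFind_ok w _ _ h _ _ _ hT hO hj)
    · split
      · rename_i j hj
        exact ih' _ (okFind_ok w _ _ h.symm _ _ _ hT hO hj)
      · exact ih' _ hO

theorem okTo_ok (w : ℕ → ℤ) (T : ℕ) (hT : Holds (fun j => w j ≤ 0) T)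
    (hl : ∀ r ∈ relL, (r.1.map w).sum = (r.2.map w).sum) (W n O : ℕ)
    (hO : Holds (fun j => 0 ≤ w j) O) (h : okTo T W n O = true) : Holds (fun j => 0 ≤ w j) W := by
  induction n generalizing O with
  | zero => exact hO.mono h
  | succ n ih =>
    unfold okTo at h
    split_ifs at h with h'
    · exact hO.mono h'
    · exact ih _ (okPass_ok w T hT _ hl _ hO) h

theorem sum_sub_map (l : List ℕ) (f g : ℕ → ℤ) :
    (l.map fun j => f j - g j).sum = (l.map f).sum - (l.map g).sum := by
  induction l with
  | nil => simp
  | cons a l ih => simp only [List.map_cons, List.sum_cons, ih]; ring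

/-- The combinatorial core: at every face of the list some generator can be subtracted. -/
theorem checkAll_ok (x : List ℤ) (h0 : ∀ j, 0 ≤ dot (rowOf j) x)
    (hk : ¬ Holds (fun j => dot (rowOf j) x ≤ 0) kMask)
    (l : List (ℕ × ℕ × List (ℕ × ℕ))) (hl : checkAll l = true) :
    ∀ n ∈ l, Holds (fun j => dot (rowOf j) x ≤ 0) n.1 →
      ∃ t < 52, ∀ j < 86, dot (rowOf j) (genL.getD t []) ≤ dot (rowOf j) x := by
  induction l with
  | nil => simp
  | cons n rest ih =>
    unfold checkAll at hl
    rw [Bool.and_eq_true] at hl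
    have ih' := ih hl.2
    intro m hm hT
    rcases List.mem_cons.1 hm with rfl | hm
    swap
    · exact ih' m hm hT
    have hc := hl.1
    unfold checkNode at hc
    rw [Bool.and_eq_true, Bool.and_eq_true, decide_eq_true_eq, List.all_eq_true] at hc
    obtain ⟨⟨hv, hE⟩, hO⟩ := hc
    by_cases hex : ∃ e ∈ m.2.2, dot (rowOf e.1) x ≤ 0
    · obtain ⟨e, he, hle⟩ := hex
      have h1 := hE e he
      rw [Bool.and_eq_true] at h1
      have h2 := closeTo_ok (fun j => dot (rowOf j) x) h0 (fun r hr => rel_sum r hr x) _ _ _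
        (by
          intro j hj
          rcases (testBit_or_one _ _ _).1 hj with hj | rfl
          · exact hT j hj
          · exact hle) h1.2
      rw [List.getD_eq_getElem?_getD] at h2
      by_cases hlen : e.2 < rest.length
      · rw [List.getElem?_eq_getElem hlen] at h2
        exact ih' _ (List.getElem_mem hlen) h2
      · rw [List.getElem?_eq_none (by omega)] at h2
        exact absurd h2 hk
    · push Not at hex
      refine ⟨m.2.1, hv, ?_⟩
      have hg := gen_nonneg _ hv
      have key := okTo_ok (fun j => dot (rowOf j) x - dot (rowOf j) (genL.getD m.2.1 [])) m.1
        (by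
          intro j hj
          have h1 := hT j hj
          by_cases hj86 : j < 86
          · have := (hg j hj86).1
            simp only at h1 ⊢
            omega
          · simp [rowOf_big (not_lt.1 hj86), dot_nil])
        (by
          intro r hr
          rw [sum_sub_map, sum_sub_map, rel_sum r hr, rel_sum r hr])
        fullMask 6 _
        (by
          intro j hj
          by_cases hj86 : j < 86
          · rcases (testBit_foldr (fun e : ℕ × ℕ => e.1) _ _ _).1 hj with hj | ⟨e, he, rfl⟩
            · have := (hg j hj86).2 hj
              have := h0 j
              omega
            · have h1 := hE e he
              rw [Bool.and_eq_true, decide_eq_true_eq] at h1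
              have h2 := hex e he
              omega
          · simp [rowOf_big (not_lt.1 hj86), dot_nil]) hO
      intro j hj
      have := key j (by
        have : fullMask = 2 ^ 86 - 1 := by decide +kernel
        rw [this, Nat.testBit_two_pow_sub_one]
        simpa using hj)
      simp only at this
      omega

def vec (k : Fin 4 → ℤ) (p : Fin 12 → ℤ) : List ℤ :=
  [k 0, k 1, k 2, k 3, p 0, p 1, p 2, p 3, p 4, p 5, p 6, p 7, p 8, p 9, p 10, p 11]

theorem gens_vec : ∀ t : Fin 52, genL.getD t [] = vec (gens t).1 (gens t).2 ∧
    ∃ i : Fin 4, (gens t).1 = Pi.single i 1 := by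
  decide +kernel

theorem dot_sub (r x y : List ℤ) (h : x.length = y.length) :
    dot r (List.zipWith (fun a b => a - b) x y) = dot r x - dot r y := by
  induction r generalizing x y with
  | nil => simp [dot]
  | cons a r ih =>
    cases x with
    | nil => cases y <;> simp_all [dot]
    | cons b x =>
      cases y with
      | nil => simp at h
      | cons c y =>
        simp only [List.zipWith_cons_cons, dot, ih x y (by simpa using h)]
        ring

theorem vec_sub (k k' : Fin 4 → ℤ) (p p' : Fin 12 → ℤ) :
    vec (k - k') (p - p') = List.zipWith (fun a b => a - b) (vec k p) (vec k' p') := rfl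

theorem forall_lt_iff (x : List ℤ) :
    (∀ j < 70, 0 ≤ dot (rowOf j) x) ↔ ∀ r ∈ hRows, 0 ≤ dot r x := by
  have hlen : hRows.length = 70 := by decide +kernel
  have hr : ∀ j (h : j < 70), rowOf j = hRows[j]'(by omega) := by
    intro j h
    rw [rowOf, allRows, List.getD_eq_getElem?_getD, List.getElem?_append_left (by omega),
      List.getElem?_eq_getElem (by omega), Option.getD_some]
  constructor
  · intro h r hrr
    obtain ⟨j, hj, rfl⟩ := List.getElem_of_mem hrr
    rw [← hr j (by omega)]
    exact h j (by omega)
  · intro h j hj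
    rw [hr j hj]
    exact h _ (List.getElem_mem _)

theorem rowOf_coord (j : ℕ) : rowOf (70 + j) = cRows.getD j [] := by
  have hlen : hRows.length = 70 := by decide +kernel
  rw [rowOf, allRows, List.getD_eq_getElem?_getD, List.getElem?_append_right (by omega), hlen,
    Nat.add_sub_cancel_left, List.getD_eq_getElem?_getD]

theorem sat_iff (k : Fin 4 → ℤ) (p : Fin 12 → ℤ) :
    SatisfiesIneqs k p ↔ ∀ j < 70, 0 ≤ dot (rowOf j) (vec k p) := by
  rw [forall_lt_iff]
  simp only [hRows, List.forall_mem_cons, vec, dot, SatisfiesIneqs, z0, p1, p2, p3, n1, n2, n3, List.not_mem_nil,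
    IsEmpty.forall_iff, implies_true, and_true, zero_mul, one_mul, zero_add, add_zero]
  repeat' refine and_congr ?_ ?_
  all_goals
    constructor <;> intro h <;> linarith

/-- The key reduction step in the proof of Theorem 1: from every signature in Σ(k) with k ≠ 0
one can subtract a fundamental generator (ε_i, g) with k_i ≥ 1, staying in Σ(k − ε_i). -/
theorem sigmaSet_reduction (k : Fin 4 → ℤ) (hk : ∀ i, 0 ≤ k i) (hk0 : k ≠ 0)
    (p : Fin 12 → ℤ) (hp : p ∈ SigmaSet k) :
    ∃ i : Fin 4, 1 ≤ k i ∧ ∃ t : Fin 52, (gens t).1 = Pi.single i 1 ∧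
      (∀ j, (gens t).2 j ≤ p j) ∧ p - (gens t).2 ∈ SigmaSet (k - Pi.single i 1) := by
  obtain ⟨hp0, hps⟩ := hp
  have hrowp : ∀ (x : Fin 4 → ℤ) (y : Fin 12 → ℤ) (j : Fin 12),
      dot (rowOf (70 + j)) (vec x y) = y j := by
    intro x y j
    rw [rowOf_coord]
    fin_cases j <;> simp [cRows, z0, p1, vec, dot]
  have hrowk : ∀ (x : Fin 4 → ℤ) (y : Fin 12 → ℤ) (i : Fin 4),
      dot (rowOf (82 + i)) (vec x y) = x i := by
    intro x y i
    rw [show 82 + (i : ℕ) = 70 + (12 + i) by omega, rowOf_coord]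
    fin_cases i <;> simp [cRows, z0, p1, vec, dot]
  have h0 : ∀ j, 0 ≤ dot (rowOf j) (vec k p) := by
    intro j
    by_cases h1 : j < 70
    · exact (sat_iff k p).1 hps j h1
    by_cases h2 : j < 82
    · have := hrowp k p ⟨j - 70, by omega⟩
      rw [show 70 + (j - 70) = j by omega] at this
      rw [this]; exact hp0 _
    by_cases h3 : j < 86
    · have := hrowk k p ⟨j - 82, by omega⟩
      rw [show 82 + (j - 82) = j by omega] at this
      rw [this]; exact hk _
    · rw [rowOf_big (by omega), dot_nil]
  have hkm : ¬ Holds (fun j => dot (rowOf j) (vec k p) ≤ 0) kMask := by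
    intro h
    apply hk0
    funext i
    have h1 := h (82 + i) (by revert i; decide +kernel)
    simp only [hrowk] at h1
    exact le_antisymm h1 (hk i)
  obtain ⟨t, ht, hle⟩ := checkAll_ok (vec k p) h0 hkm nodeL checkAll_nodeL
    (nodeL.headD (0, 0, [])) (by decide +kernel) (by
      have : (nodeL.headD (0, 0, [])).1 = 0 := by decide +kernel
      rw [this]; intro j hj; simp at hj)
  obtain ⟨hvec, i, hi⟩ := gens_vec ⟨t, ht⟩
  simp only at hvec
  rw [hvec] at hle
  have hge : ∀ j < 86, 0 ≤ dot (rowOf j) (vec (k - Pi.single i 1) (p - (gens ⟨t, ht⟩).2)) := by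
    intro j hj
    rw [vec_sub, dot_sub _ _ _ (by simp [vec]), ← hi]
    exact sub_nonneg.2 (hle j hj)
  have hpj : ∀ j, 0 ≤ (p - (gens ⟨t, ht⟩).2) j := by
    intro j
    have := hge (70 + j) (by omega)
    rwa [hrowp] at this
  refine ⟨i, ?_, ⟨t, ht⟩, hi, fun j => sub_nonneg.1 (hpj j), hpj, ?_⟩
  · have := hge (82 + i) (by omega)
    rw [hrowk] at this
    simpa using this
  · exact (sat_iff _ _).2 fun j hj => hge j (by omega)
end
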